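/- arXiv:1404.5662 — 3 statements merged into one kernel-verified Lean document; each statement's English description precedes it below -/
import Mathlib

section
/- Let P be a d-dimensional simplicial polytope that is a local extremum (with respect to the Hausdorff metric on the space of d-dimensional convex bodies) of the functional K ↦ L_K, and assume P is isotropic. Let F be a facet of P with vertices v_1, …, v_d. Then for every k ∈ {1, …, d}: Σ_{1 ≤ i ≤ j ≤ d} (1 + δ_{ik} + δ_{jk}) ⟨v_i, v_j⟩ = (d+1)(d+2)²/2, where δ is the Kronecker delta and ⟨·,·⟩ is the standard inner product on ℝ^d. -/
open MeasureTheory Finset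
open scoped ProbabilityTheory
open scoped RealInnerProductSpace

noncomputable section

abbrev Euc (d : ℕ) := EuclideanSpace ℝ (Fin d)

section GeneralSpace

variable {V : Type*} [NormedAddCommGroup V] [NormedSpace ℝ V]

/-- The dimension of a set: the rank of the direction of its affine span. -/
noncomputable def sdim (F : Set V) : ℕ := Module.finrank ℝ (affineSpan ℝ F).direction

/-- `F` is a simplex with `n` vertices (an `(n-1)`-dimensional simplex). -/
def IsSimplexWith (n : ℕ) (F : Set V) : Prop :=
  ∃ w : Fin n → V, AffineIndependent ℝ w ∧ F = convexHull ℝ (Set.range w)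

/-- A polytope is the convex hull of finitely many points. -/
def IsPolytope (P : Set V) : Prop := ∃ S : Finset V, P = convexHull ℝ (S : Set V)

/-- A facet of a `d`-dimensional polytope: an exposed face of dimension `d - 1`. -/
def IsFacetOf (d : ℕ) (P F : Set V) : Prop := IsExposed ℝ P F ∧ sdim F = d - 1

/-- A `d`-dimensional simplicial polytope: a polytope of dimension `d`, each facet of which
is a `(d-1)`-dimensional simplex (i.e. has `d` affinely independent vertices). -/
def IsSimplicialPolytope (d : ℕ) (P : Set V) : Prop :=
  IsPolytope P ∧ sdim P = d ∧ ∀ F : Set V, IsFacetOf d P F → IsSimplexWith d F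

end GeneralSpace

/-- A convex body: compact, convex, with nonempty interior. -/
def IsConvexBody {d : ℕ} (K : Set (Euc d)) : Prop :=
  IsCompact K ∧ Convex ℝ K ∧ (interior K).Nonempty

/-- The barycenter `μ_K` of the uniform distribution on `K`. -/
noncomputable def centroid {d : ℕ} (K : Set (Euc d)) : Euc d :=
  (volume K).toReal⁻¹ • ∫ x in K, x

/-- The covariance matrix `A(K)` of the uniform distribution on `K`. -/
noncomputable def covMatrix {d : ℕ} (K : Set (Euc d)) : Matrix (Fin d) (Fin d) ℝ :=
  Matrix.of fun i j =>
    (volume K).toReal⁻¹ * ∫ x in K, (x i - centroid K i) * (x j - centroid K j)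

/-- The isotropic constant `L_K`, defined by `L_K ^ (2d) = det A(K) / vol(K) ^ 2`. -/
noncomputable def isoConst {d : ℕ} (K : Set (Euc d)) : ℝ :=
  ((covMatrix K).det / (volume K).toReal ^ 2) ^ ((2 * (d : ℝ))⁻¹)

/-- `K` is isotropic: its barycenter is the origin and its covariance matrix is the identity. -/
def IsIsotropic {d : ℕ} (K : Set (Euc d)) : Prop :=
  centroid K = 0 ∧ covMatrix K = 1

/-- `P` is a local extremum (local maximum or local minimum) of `K ↦ L_K` among convex bodies,
with respect to the Hausdorff metric. -/
def IsLocalExtremumOfIsoConst {d : ℕ} (P : Set (Euc d)) : Prop :=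
  (∃ ε > 0, ∀ K : Set (Euc d), IsConvexBody K →
      Metric.hausdorffDist K P < ε → isoConst K ≤ isoConst P) ∨
  (∃ ε > 0, ∀ K : Set (Euc d), IsConvexBody K →
      Metric.hausdorffDist K P < ε → isoConst P ≤ isoConst K)

/-- The polar angle of `(a, b) ∈ ℝ²`, normalized to lie in `[-π, π)`. -/
noncomputable def polarAngle (a b : ℝ) : ℝ :=
  if Complex.arg ⟨a, b⟩ = Real.pi then -Real.pi else Complex.arg ⟨a, b⟩

/-! ### Rank-one affine changes of variables -/

section ChangeOfVariables

variable {d : ℕ}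

/-- Change of variables for the rank-one perturbation `x ↦ x + φ x • u` of the identity, whose
determinant is `1 + φ.linear u`. -/
lemma integral_comp_add_smul (φ : Euc d →ᵃ[ℝ] ℝ) (u : Euc d) (hu : 1 + φ.linear u ≠ 0)
    (h : Euc d → ℝ) :
    ∫ x, h (x + φ x • u) = |1 + φ.linear u|⁻¹ * ∫ x, h x := by
  have hdet : LinearMap.det (LinearMap.transvection φ.linear u) = 1 + φ.linear u := by simp
  have hdet' : LinearMap.det (LinearMap.transvection φ.linear u) ≠ 0 := by rwa [hdet]
  let e : Euc d ≃ₗ[ℝ] Euc d := LinearMap.equivOfDetNeZero _ hdet'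
  have he : ∀ x, e x = x + φ.linear x • u := fun x => rfl
  have hmap : Measure.map e (volume : Measure (Euc d))
      = ENNReal.ofReal |(1 + φ.linear u)⁻¹| • volume := by
    have := Measure.map_linearMap_addHaar_eq_smul_addHaar (volume : Measure (Euc d)) hdet'
    rw [hdet] at this
    exact this
  have hcomp : ∀ g : Euc d → ℝ, ∫ x, g (e x) = |1 + φ.linear u|⁻¹ * ∫ x, g x := by
    intro g
    have hemb : MeasurableEmbedding e :=
      e.toContinuousLinearEquiv.toHomeomorph.measurableEmbedding
    rw [← hemb.integral_map g, hmap, integral_smul_measure, ENNReal.toReal_ofReal (abs_nonneg _),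
      abs_inv, smul_eq_mul]
  have hφ : ∀ x, x + φ x • u = e x + φ 0 • u := by
    intro x
    have : φ x = φ.linear x + φ 0 := by
      have := φ.map_vadd 0 x
      simpa using this
    rw [he, this, add_smul, add_assoc]
  simp_rw [hφ]
  rw [hcomp (fun y => h (y + φ 0 • u)), integral_add_right_eq_self h]

lemma setIntegral_comp_add_smul (φ : Euc d →ᵃ[ℝ] ℝ) (u : Euc d) (hu : 1 + φ.linear u ≠ 0)
    {S : Set (Euc d)} (hS : MeasurableSet S) (h : Euc d → ℝ) :
    ∫ x in {x | x + φ x • u ∈ S}, h (x + φ x • u) = |1 + φ.linear u|⁻¹ * ∫ x in S, h x := by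
  have hc : Continuous fun x => x + φ x • u := by
    have := φ.continuous_of_finiteDimensional
    fun_prop
  rw [← integral_indicator hS, ← integral_comp_add_smul φ u hu, ← integral_indicator]
  · rfl
  · exact hc.measurable hS

lemma volume_affine_eq_zero (φ : Euc d →ᵃ[ℝ] ℝ) {x : Euc d} (hx : φ x ≠ 0) :
    volume {y | φ y = 0} = 0 := by
  have h := Measure.addHaar_affineSubspace (volume : Measure (Euc d))
    ((AffineSubspace.mk' (0 : ℝ) (⊥ : Submodule ℝ ℝ)).comap φ) ?_
  · convert h using 2
    ext y
    simp
  · intro htop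
    have : x ∈ (AffineSubspace.mk' (0 : ℝ) (⊥ : Submodule ℝ ℝ)).comap φ := by
      rw [htop]; trivial
    simp at this
    exact hx this

end ChangeOfVariables

/-! ### Second moments of a simplex -/

section Moments

variable {d : ℕ} {ι : Type*}

lemma affine_add_smul (ψ : Euc d →ᵃ[ℝ] ℝ) (x u : Euc d) (r : ℝ) :
    ψ (x + r • u) = ψ x + r * ψ.linear u := by
  have := ψ.map_vadd x (r • u)
  rw [vadd_eq_add, add_comm] at this
  rw [this, map_smul, vadd_eq_add, smul_eq_mul, add_comm]

/-- The simplex spanned by an affine basis. -/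
def simplexOf (b : AffineBasis ι ℝ (Euc d)) : Set (Euc d) := {x | ∀ i, 0 ≤ b.coord i x}

lemma coord_linear_sub (b : AffineBasis ι ℝ (Euc d)) (i : ι) (x y : Euc d) :
    (b.coord i).linear (x - y) = b.coord i x - b.coord i y := by
  rw [← vsub_eq_sub, AffineMap.linearMap_vsub, vsub_eq_sub]

lemma continuous_coord (b : AffineBasis ι ℝ (Euc d)) (i : ι) : Continuous (b.coord i) :=
  (b.coord i).continuous_of_finiteDimensional

lemma simplexOf_eq_convexHull (b : AffineBasis ι ℝ (Euc d)) :
    simplexOf b = convexHull ℝ (Set.range b) := b.convexHull_eq_nonneg_coord.symm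

lemma isCompact_simplexOf [Finite ι] (b : AffineBasis ι ℝ (Euc d)) :
    IsCompact (simplexOf b) := by
  rw [simplexOf_eq_convexHull]
  exact (Set.finite_range b).isCompact_convexHull ℝ

/-- Bisecting a simplex at the midpoint of an edge expresses an integral over the simplex as an
average of two integrals over the same simplex. -/
lemma setIntegral_simplexOf_bisect [Finite ι] (b : AffineBasis ι ℝ (Euc d))
    {i j : ι} (hij : i ≠ j) {f : Euc d → ℝ} (hf : Continuous f) :
    ∫ x in simplexOf b, f x =
      ((∫ x in simplexOf b, f (x + (b.coord j x / 2) • (b i - b j))) +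
        ∫ x in simplexOf b, f (x + (b.coord i x / 2) • (b j - b i))) / 2 := by
  classical
  have half : ∀ i j : ι, i ≠ j →
      ∫ x in simplexOf b ∩ {x | b.coord j x ≤ b.coord i x}, f x
        = (∫ x in simplexOf b, f (x + (b.coord j x / 2) • (b i - b j))) / 2 := by
    intro i j hij
    have hS : MeasurableSet (simplexOf b ∩ {x | b.coord j x ≤ b.coord i x}) :=
      ((isCompact_simplexOf b).isClosed.inter
        (isClosed_le (continuous_coord b j) (continuous_coord b i))).measurableSet
    have hdet : 1 + ((1 / 2 : ℝ) • b.coord j).linear (b i - b j) = 1 / 2 := by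
      rw [AffineMap.smul_linear, LinearMap.smul_apply, coord_linear_sub]
      simp [b.coord_apply, hij.symm]
      norm_num
    have key := setIntegral_comp_add_smul ((1 / 2 : ℝ) • b.coord j) (b i - b j)
      (by rw [hdet]; norm_num) hS f
    have hφ : ∀ x, ((1 / 2 : ℝ) • b.coord j) x = b.coord j x / 2 := by
      intro x; simp; ring
    rw [hdet] at key
    simp_rw [hφ] at key
    have hset : {x | x + (b.coord j x / 2) • (b i - b j) ∈
        simplexOf b ∩ {x | b.coord j x ≤ b.coord i x}} = simplexOf b := by
      ext x
      simp only [Set.mem_ofPred_eq, Set.mem_inter_iff, simplexOf, affine_add_smul, coord_linear_sub,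
        b.coord_apply]
      constructor
      · rintro ⟨h1, h2⟩ l
        by_cases hl : l = j
        · subst hl
          have := h1 l
          simp [hij.symm] at this
          linarith
        · by_cases hl' : l = i
          · subst hl'
            simp [hij, hij.symm] at h2
            linarith
          · have := h1 l
            simpa [hl, hl'] using this
      · intro h
        refine ⟨fun l => ?_, ?_⟩
        · have hj := h j
          have hl := h l
          by_cases hl1 : l = j
          · subst hl1
            simp [hij.symm]
            linarith
          · by_cases hl2 : l = i
            · subst hl2
              simp [hij]
              linarith
            · simpa [hl1, hl2] using hl
        · have hi := h i
          simp [hij, hij.symm]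
          linarith
    rw [hset] at key
    rw [key, abs_of_pos (by norm_num)]
    ring
  have hunion : simplexOf b = simplexOf b ∩ {x | b.coord j x ≤ b.coord i x} ∪
      simplexOf b ∩ {x | b.coord i x ≤ b.coord j x} := by
    rw [← Set.inter_union_distrib_left]
    refine (Set.inter_eq_left.2 fun x _ => ?_).symm
    exact le_total (b.coord j x) (b.coord i x)
  have hint : IntegrableOn f (simplexOf b) := hf.continuousOn.integrableOn_compact
    (isCompact_simplexOf b)
  conv_lhs => rw [hunion]
  rw [setIntegral_union₀, half i j hij, half j i hij.symm, add_div]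
  · have hnull := volume_affine_eq_zero (b.coord i - b.coord j) (x := b i)
      (by simp [b.coord_apply, hij.symm])
    refine measure_mono_null ?_ hnull
    rintro x ⟨⟨-, h1⟩, -, h2⟩
    simp only [Set.mem_ofPred_eq] at h1 h2 ⊢
    simp
    linarith
  · exact ((isCompact_simplexOf b).isClosed.inter
      (isClosed_le (continuous_coord b i) (continuous_coord b j))).measurableSet.nullMeasurableSet
  · exact hint.mono_set Set.inter_subset_left
  · exact hint.mono_set Set.inter_subset_left

lemma setIntegral_coord_mul_coord [Fintype ι] [DecidableEq ι] (b : AffineBasis ι ℝ (Euc d))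
    (i j : ι) :
    ((Fintype.card ι : ℝ) * (Fintype.card ι + 1)) *
        ∫ x in simplexOf b, b.coord i x * b.coord j x
      = (if i = j then 2 else 1) * volume.real (simplexOf b) := by
  have hint : ∀ i j, IntegrableOn (fun x => b.coord i x * b.coord j x) (simplexOf b) :=
    fun i j => ((continuous_coord b i).mul
      (continuous_coord b j)).continuousOn.integrableOn_compact (isCompact_simplexOf b)
  set M : ι → ι → ℝ := fun i j => ∫ x in simplexOf b, b.coord i x * b.coord j x
  have hquad : ∀ i j (p q r : ℝ), ∫ x in simplexOf b, (p * (b.coord i x * b.coord i x) +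
      q * (b.coord i x * b.coord j x) + r * (b.coord j x * b.coord j x))
        = p * M i i + q * M i j + r * M j j := by
    intro i j p q r
    rw [integral_add, integral_add, integral_const_mul, integral_const_mul, integral_const_mul]
    · exact (hint i i).const_mul p
    · exact (hint i j).const_mul q
    · exact ((hint i i).const_mul p).add ((hint i j).const_mul q)
    · exact (hint j j).const_mul r
  have hoff : ∀ i j, i ≠ j → M i j = (M i i + M j j) / 4 := by
    intro i j hij
    have h := setIntegral_simplexOf_bisect b hij
      (f := fun x => b.coord i x * b.coord j x)
      ((continuous_coord b i).mul (continuous_coord b j))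
    have h1 := hquad i j 0 (1 / 2) (1 / 4)
    have h2 := hquad i j (1 / 4) (1 / 2) 0
    simp only [affine_add_smul, coord_linear_sub, b.coord_apply, hij, hij.symm, if_true,
      if_false] at h
    rw [← sub_eq_zero] at h ⊢
    have e1 : ∀ x, (b.coord i x + b.coord j x / 2 * (1 - 0)) *
      (b.coord j x + b.coord j x / 2 * (0 - 1)) = 0 * (b.coord i x * b.coord i x) +
      1 / 2 * (b.coord i x * b.coord j x) + 1 / 4 * (b.coord j x * b.coord j x) := by
        intro x; ring
    have e2 : ∀ x, (b.coord i x + b.coord i x / 2 * (0 - 1)) *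
      (b.coord j x + b.coord i x / 2 * (1 - 0)) = 1 / 4 * (b.coord i x * b.coord i x) +
      1 / 2 * (b.coord i x * b.coord j x) + 0 * (b.coord j x * b.coord j x) := by
        intro x; ring
    simp_rw [e1, e2, h1, h2] at h
    change M i j - _ = 0 at h
    linarith
  have hdiag : ∀ i j, M i i = M j j := by
    intro i j
    by_cases hij : i = j
    · rw [hij]
    have h := setIntegral_simplexOf_bisect b hij
      (f := fun x => b.coord i x * b.coord i x)
      ((continuous_coord b i).mul (continuous_coord b i))
    have h1 := hquad i j 1 1 (1 / 4)
    have h2 := hquad i j (1 / 4) 0 0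
    simp only [affine_add_smul, coord_linear_sub, b.coord_apply, hij, if_true,
      if_false] at h
    have e1 : ∀ x, (b.coord i x + b.coord j x / 2 * (1 - 0)) *
      (b.coord i x + b.coord j x / 2 * (1 - 0)) = 1 * (b.coord i x * b.coord i x) +
      1 * (b.coord i x * b.coord j x) + 1 / 4 * (b.coord j x * b.coord j x) := by
        intro x; ring
    have e2 : ∀ x, (b.coord i x + b.coord i x / 2 * (0 - 1)) *
      (b.coord i x + b.coord i x / 2 * (0 - 1)) = 1 / 4 * (b.coord i x * b.coord i x) +
      0 * (b.coord i x * b.coord j x) + 0 * (b.coord j x * b.coord j x) := by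
        intro x; ring
    simp_rw [e1, e2, h1, h2] at h
    change M i i = _ at h
    have := hoff i j hij
    linarith
  obtain ⟨c, hMij⟩ : ∃ c, ∀ k l, M k l = (if k = l then 2 else 1) * c := by
    refine ⟨M i i / 2, fun k l => ?_⟩
    split_ifs with h
    · rw [h, hdiag l i]; ring
    · rw [hoff k l h, hdiag k i, hdiag l i]; ring
  have hvol : volume.real (simplexOf b) = ∑ k, ∑ l, M k l := by
    have h1 : ∀ x, (1 : ℝ) = ∑ k, ∑ l, b.coord k x * b.coord l x := by
      intro x
      rw [← Finset.sum_mul_sum, b.sum_coord_apply_eq_one, one_mul]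
    have h2 : volume.real (simplexOf b) = ∫ x in simplexOf b, (1 : ℝ) := by simp
    rw [h2, setIntegral_congr_fun (isCompact_simplexOf b).measurableSet fun x _ => h1 x]
    rw [integral_finsetSum _ fun k _ => integrable_finsetSum _ fun l _ => hint k l]
    exact Finset.sum_congr rfl fun k _ => integral_finsetSum _ fun l _ => hint k l
  have hsum : ∀ k : ι, ∑ l, (if k = l then (2 : ℝ) else 1) = Fintype.card ι + 1 := by
    intro k
    have : ∀ l, (if k = l then (2 : ℝ) else 1) = 1 + if k = l then 1 else 0 := by
      intro l; split_ifs <;> norm_num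
    simp_rw [this]
    rw [Finset.sum_add_distrib, Finset.sum_ite_eq]
    simp
  have hvol' : volume.real (simplexOf b)
      = (Fintype.card ι : ℝ) * (Fintype.card ι + 1) * c := by
    rw [hvol]
    simp_rw [hMij, ← Finset.sum_mul, hsum]
    rw [Finset.sum_const, Finset.card_univ, nsmul_eq_mul]
  change _ * M i j = _
  rw [hvol', hMij i j]
  ring

end Moments

/-! ### First variation of the isotropic constant -/

section FirstVariation

open Filter Topology

variable {d : ℕ}

lemma centroid_apply {K : Set (Euc d)} (hK : IsCompact K) (i : Fin d) :
    _root_.centroid K i = (volume.real K)⁻¹ * ∫ x in K, x i := by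
  have hint : IntegrableOn (fun x : Euc d => x) K :=
    continuous_id.continuousOn.integrableOn_compact hK
  have := (EuclideanSpace.proj i : Euc d →L[ℝ] ℝ).integral_comp_comm hint
  change ∫ x in K, x i = (∫ x in K, x) i at this
  simp [_root_.centroid, this, Measure.real]

lemma covMatrix_apply {K : Set (Euc d)} (hK : IsCompact K) (hV : volume.real K ≠ 0) (i j : Fin d) :
    covMatrix K i j = (volume.real K)⁻¹ * (∫ x in K, x i * x j) -
      ((volume.real K)⁻¹ * ∫ x in K, x i) * ((volume.real K)⁻¹ * ∫ x in K, x j) := by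
  have hint : ∀ f : Euc d → ℝ, Continuous f → IntegrableOn f K := fun f hf =>
    hf.continuousOn.integrableOn_compact hK
  have hexp : ∀ a c : ℝ, ∫ x in K, (x i - a) * (x j - c) =
      (∫ x in K, x i * x j) - c * (∫ x in K, x i) - a * (∫ x in K, x j)
        + volume.real K * (a * c) := by
    intro a c
    have : ∀ x : Euc d, (x i - a) * (x j - c) = x i * x j - c * x i - a * x j + a * c := by
      intro x; ring
    simp_rw [this]
    rw [integral_add, integral_sub, integral_sub, integral_const_mul, integral_const_mul,
      setIntegral_const, smul_eq_mul]
    all_goals exact hint _ (by fun_prop)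
  have : covMatrix K i j = (volume.real K)⁻¹ *
      ∫ x in K, (x i - _root_.centroid K i) * (x j - _root_.centroid K j) := rfl
  rw [this, hexp, centroid_apply hK, centroid_apply hK]
  field_simp
  ring

/-- The derivative of the determinant at the identity is the trace. -/
lemma hasDerivWithinAt_det_of_eq_one {A : ℝ → Matrix (Fin d) (Fin d) ℝ}
    {A' : Matrix (Fin d) (Fin d) ℝ} {s : Set ℝ} {t : ℝ} (hA : A t = 1)
    (h : ∀ i j, HasDerivWithinAt (fun r => A r i j) (A' i j) s t) :
    HasDerivWithinAt (fun r => (A r).det) A'.trace s t := by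
  have key : ∀ σ : Equiv.Perm (Fin d), HasDerivWithinAt
      (fun r => ((Equiv.Perm.sign σ : ℤ) : ℝ) * ∏ i, A r (σ i) i)
      (((Equiv.Perm.sign σ : ℤ) : ℝ) *
        ∑ i, (∏ j ∈ Finset.univ.erase i, A t (σ j) j) • A' (σ i) i) s t := fun σ =>
    (HasDerivWithinAt.fun_finsetProd fun i _ => h (σ i) i).const_mul _
  have hsum := HasDerivWithinAt.fun_sum fun σ (_ : σ ∈ Finset.univ) => key σ
  simp_rw [Matrix.det_apply']
  convert! hsum using 1
  rw [Finset.sum_eq_single (1 : Equiv.Perm (Fin d))]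
  · simp [hA, Matrix.trace]
  · intro σ _ hσ
    rw [Finset.sum_eq_zero, mul_zero]
    intro i _
    obtain ⟨j, hji, hj⟩ : ∃ j, j ≠ i ∧ σ j ≠ j := by
      by_contra! hcon
      apply hσ
      ext j
      by_cases hj : j = i
      · subst hj
        by_contra hne
        have h1 : σ j ≠ j := fun h => hne (by rw [h]; rfl)
        exact h1 (σ.injective (hcon _ h1))
      · simp [hcon j hj]
    rw [Finset.prod_eq_zero (i := j) (by simp [hji]), zero_smul]
    simp [hA, hj]
  · simp

/-- First variation of `det A(K) / vol(K) ^ 2` at an isotropic body. -/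
lemma hasDerivWithinAt_det_covMatrix_div {K : ℝ → Set (Euc d)}
    (hK : ∀ᶠ t in 𝓝[>] 0, IsCompact (K t)) (hK0 : IsCompact (K 0)) (hV : volume.real (K 0) ≠ 0)
    (hiso : IsIsotropic (K 0)) {D : (Euc d → ℝ) → ℝ}
    (hD : ∀ f, Continuous f → HasDerivWithinAt (fun t => ∫ x in K t, f x) (D f) (Set.Ioi 0) 0) :
    HasDerivWithinAt (fun t => (covMatrix (K t)).det / volume.real (K t) ^ 2)
      ((∑ i, D (fun x => x i * x i) - (d + 2) * D (fun _ => 1)) / volume.real (K 0) ^ 3)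
      (Set.Ioi 0) 0 := by
  have hvol : ∀ t, volume.real (K t) = ∫ x in K t, (1 : ℝ) := by simp
  have hVd : HasDerivWithinAt (fun t => volume.real (K t)) (D fun _ => 1) (Set.Ioi 0) 0 := by
    simp_rw [hvol]
    exact hD _ continuous_const
  have hVne : ∀ᶠ t in 𝓝[>] 0, volume.real (K t) ≠ 0 :=
    hVd.continuousWithinAt.eventually_ne hV
  have hm0 : ∀ i, ∫ x in K 0, x i = 0 := by
    intro i
    have h := centroid_apply hK0 i
    rw [hiso.1] at h
    simpa [hV] using h
  have hM0 : ∀ i j, ∫ x in K 0, x i * x j = volume.real (K 0) * (1 : Matrix _ _ ℝ) i j := by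
    intro i j
    have h := covMatrix_apply hK0 hV i j
    rw [hiso.2, hm0] at h
    rw [h]
    field_simp
    ring
  let B : ℝ → Matrix (Fin d) (Fin d) ℝ := fun t => Matrix.of fun i j =>
    (volume.real (K t))⁻¹ * (∫ x in K t, x i * x j) -
      ((volume.real (K t))⁻¹ * ∫ x in K t, x i) * ((volume.real (K t))⁻¹ * ∫ x in K t, x j)
  have hcov : ∀ t, IsCompact (K t) → volume.real (K t) ≠ 0 → covMatrix (K t) = B t := by
    intro t h1 h2
    ext i j
    exact covMatrix_apply h1 h2 i j
  have hB : ∀ i j, HasDerivWithinAt (fun t => B t i j)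
      ((volume.real (K 0))⁻¹ * (D (fun x => x i * x j) - (1 : Matrix _ _ ℝ) i j * D fun _ => 1))
      (Set.Ioi 0) 0 := by
    intro i j
    have hinv := hVd.fun_inv hV
    have h1 := hinv.fun_mul (hD (fun x => x i * x j) (by fun_prop))
    have h2 := fun i : Fin d => hinv.fun_mul (hD (fun x => x i) (by fun_prop))
    have h3 := h1.fun_sub ((h2 i).fun_mul (h2 j))
    refine h3.congr_deriv ?_
    rw [hm0, hm0, hM0]
    field_simp
    ring
  have hdet := hasDerivWithinAt_det_of_eq_one (A := B)
    (A' := Matrix.of fun i j => (volume.real (K 0))⁻¹ *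
      (D (fun x => x i * x j) - (1 : Matrix _ _ ℝ) i j * D fun _ => 1))
    (by rw [← hcov 0 hK0 hV, hiso.2]) hB
  have hB0 : (B 0).det = 1 := by rw [← hcov 0 hK0 hV, hiso.2, Matrix.det_one]
  have hdiv := hdet.fun_div (hVd.fun_pow 2) (pow_ne_zero 2 hV)
  have htr : (Matrix.of fun i j => (volume.real (K 0))⁻¹ *
      (D (fun x => x i * x j) - (1 : Matrix (Fin d) (Fin d) ℝ) i j * D fun _ => 1)).trace
        = (volume.real (K 0))⁻¹ * (∑ i, D (fun x => x i * x i) - d * D fun _ => 1) := by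
    simp [Matrix.trace, ← Finset.mul_sum]
  refine (hdiv.congr_of_eventuallyEq ?_ ?_).congr_deriv ?_
  · filter_upwards [hK, hVne] with t h1 h2
    rw [hcov t h1 h2]
  · rw [hcov 0 hK0 hV]
  · rw [htr, hB0]
    field_simp
    ring

lemma volume_real_pos {K : Set (Euc d)} (hK : IsConvexBody K) : 0 < volume.real K := by
  have h1 : 0 < volume K := Measure.measure_pos_of_nonempty_interior _ hK.2.2
  exact ENNReal.toReal_pos h1.ne' hK.1.measure_lt_top.ne

/-- First order condition along a one-sided perturbation; `σ = 1` for local maxima and `σ = -1`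
for local minima. -/
lemma first_order_condition (hd : d ≠ 0) {P : Set (Euc d)} (hP : IsConvexBody P)
    (hiso : IsIsotropic P) {σ ε : ℝ} (hσ : σ = 1 ∨ σ = -1) (hε : 0 < ε)
    (hext : ∀ K : Set (Euc d), IsConvexBody K → Metric.hausdorffDist K P < ε →
      σ * isoConst K ≤ σ * isoConst P)
    {K : ℝ → Set (Euc d)} (hK0 : K 0 = P) (hK : ∀ᶠ t in 𝓝[>] 0, IsConvexBody (K t)) {C : ℝ}
    (hdist : ∀ᶠ t in 𝓝[>] 0, Metric.hausdorffDist (K t) P ≤ C * t) {D : (Euc d → ℝ) → ℝ}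
    (hD : ∀ f, Continuous f → HasDerivWithinAt (fun t => ∫ x in K t, f x) (D f) (Set.Ioi 0) 0) :
    σ * (∑ i, D (fun x => x i * x i) - (d + 2) * D (fun _ => 1)) ≤ 0 := by
  subst hK0
  have hVpos := volume_real_pos hP
  have hder := hasDerivWithinAt_det_covMatrix_div (hK.mono fun t h => h.1) hP.1 hVpos.ne' hiso hD
  set φ : ℝ → ℝ := fun t => (covMatrix (K t)).det / volume.real (K t) ^ 2 with hφ
  have hφ0 : 0 < φ 0 := by
    simp only [hφ, hiso.2, Matrix.det_one]
    positivity
  have hφpos : ∀ᶠ t in 𝓝[>] 0, 0 < φ t :=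
    hder.continuousWithinAt.eventually (lt_mem_nhds hφ0)
  have hsmall : ∀ᶠ t in 𝓝[>] (0 : ℝ), C * t < ε := by
    have : Tendsto (fun t : ℝ => C * t) (𝓝[>] 0) (𝓝 (C * 0)) :=
      ((continuous_const.mul continuous_id).tendsto 0).mono_left nhdsWithin_le_nhds
    rw [mul_zero] at this
    exact this.eventually (gt_mem_nhds hε)
  have hexp : 0 < (2 * (d : ℝ))⁻¹ := by positivity
  have hle : ∀ᶠ t in 𝓝[>] 0, σ * φ t ≤ σ * φ 0 := by
    filter_upwards [hK, hdist, hsmall, hφpos] with t h1 h2 h3 h4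
    have h := hext (K t) h1 (h2.trans_lt h3)
    change σ * (φ t) ^ _ ≤ σ * (φ 0) ^ _ at h
    rcases hσ with rfl | rfl
    · rw [one_mul, one_mul] at h ⊢
      exact (Real.rpow_le_rpow_iff h4.le hφ0.le hexp).1 h
    · have h' : (φ 0) ^ (2 * (d : ℝ))⁻¹ ≤ (φ t) ^ (2 * (d : ℝ))⁻¹ := by linarith
      have := (Real.rpow_le_rpow_iff hφ0.le h4.le hexp).1 h'
      linarith
  have hslope := (hasDerivWithinAt_iff_tendsto_slope' (by simp)).1 (hder.const_mul σ)
  have hnonpos := le_of_tendsto hslope (b := 0) <| by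
    filter_upwards [hle, self_mem_nhdsWithin] with t h1 h2
    rw [slope_def_field]
    exact div_nonpos_of_nonpos_of_nonneg (by linarith) (by simpa using le_of_lt h2)
  rw [mul_div_assoc'] at hnonpos
  by_contra! hcon
  exact absurd hnonpos (not_le.2 (div_pos hcon (by positivity)))

end FirstVariation

/-! ### Pushing out and cutting off a simplicial facet -/

section Perturbation

open Filter Topology

variable {d : ℕ}

lemma affine_combo (ψ : Euc d →ᵃ[ℝ] ℝ) {x y : Euc d} {r s : ℝ} (h : r + s = 1) :
    ψ (r • x + s • y) = r * ψ x + s * ψ y := by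
  rw [Convex.combo_affine_apply h, smul_eq_mul, smul_eq_mul]

/-- The affine map `x ↦ x + φ x • u`. -/
def addSMulAffineMap (φ : Euc d →ᵃ[ℝ] ℝ) (u : Euc d) : Euc d →ᵃ[ℝ] Euc d :=
  AffineMap.id ℝ _ + (LinearMap.toSpanSingleton ℝ (Euc d) u).toAffineMap.comp φ

lemma addSMulAffineMap_apply (φ : Euc d →ᵃ[ℝ] ℝ) (u x : Euc d) :
    addSMulAffineMap φ u x = x + φ x • u := by
  simp [addSMulAffineMap]

/-- The first variation produced by moving the facet opposite to `b none`: the displacement is the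
tent over the facet with apex above `c`. -/
def tentVariation (b : AffineBasis (Option (Fin d)) ℝ (Euc d)) (c : Euc d) (f : Euc d → ℝ) : ℝ :=
  ∫ x in simplexOf b, f (x + b.coord none x • (c - b none))

lemma continuous_setIntegral_simplexOf (b : AffineBasis (Option (Fin d)) ℝ (Euc d)) (c : Euc d)
    {f : Euc d → ℝ} (hf : Continuous f) :
    Continuous fun t : ℝ =>
      ∫ x in simplexOf b, f (x + ((1 + t) * b.coord none x) • (c - b none)) := by
  refine continuous_parametric_integral_of_continuous ?_ (isCompact_simplexOf b)
  have := continuous_coord b none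
  fun_prop

section Outward

variable {P : Set (Euc d)} {b : AffineBasis (Option (Fin d)) ℝ (Euc d)} {c : Euc d}

/-- `P` with a pyramid erected above the point `c`. -/
def raise (P : Set (Euc d)) (b : AffineBasis (Option (Fin d)) ℝ (Euc d)) (c : Euc d) (t : ℝ) :
    Set (Euc d) :=
  convexHull ℝ (insert (c + t • (c - b none)) P)

/-- The pyramid over the facet opposite to `b none` with apex `c + t • (c - b none)`. -/
def pyramid (b : AffineBasis (Option (Fin d)) ℝ (Euc d)) (c : Euc d) (t : ℝ) : Set (Euc d) :=
  {x | b.coord none x ≤ 0 ∧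
    ∀ i, 0 ≤ t * b.coord (some i) x + (1 + t) * b.coord (some i) c * b.coord none x}

lemma coord_apex (hc0 : b.coord none c = 0) (t : ℝ) :
    b.coord none (c + t • (c - b none)) = -t ∧
      ∀ i, b.coord (some i) (c + t • (c - b none)) = (1 + t) * b.coord (some i) c := by
  constructor
  · rw [affine_add_smul, coord_linear_sub, hc0, b.coord_apply]
    simp
  · intro i
    rw [affine_add_smul, coord_linear_sub, b.coord_apply]
    simp
    ring

lemma preimage_pyramid (hc0 : b.coord none c = 0) {t : ℝ} (ht : 0 < t) :
    {x | x + ((1 + t) • b.coord none) x • (c - b none) ∈ pyramid b c t} = simplexOf b := by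
  ext x
  have h0 : b.coord none (x + ((1 + t) • b.coord none) x • (c - b none))
      = -(t * b.coord none x) := by
    rw [affine_add_smul, coord_linear_sub, hc0, b.coord_apply]
    simp
    ring
  have hi : ∀ i, b.coord (some i) (x + ((1 + t) • b.coord none) x • (c - b none))
      = b.coord (some i) x + (1 + t) * b.coord none x * b.coord (some i) c := by
    intro i
    rw [affine_add_smul, coord_linear_sub, b.coord_apply]
    simp
  have he : ∀ i, t * (b.coord (some i) x + (1 + t) * b.coord none x * b.coord (some i) c) +
      (1 + t) * b.coord (some i) c * -(t * b.coord none x) = t * b.coord (some i) x := by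
    intro i; ring
  simp only [Set.mem_ofPred_eq, pyramid, simplexOf, h0, hi, he, Option.forall, neg_nonpos,
    mul_nonneg_iff_of_pos_left ht]

lemma pyramid_subset_raise (hΔ : simplexOf b ⊆ P) (hc0 : b.coord none c = 0) {t : ℝ}
    (ht : 0 < t) : pyramid b c t ⊆ raise P b c t := by
  intro y hy
  set T := addSMulAffineMap ((1 + t) • b.coord none) (c - b none)
  have hTx : ∀ x, T x = x + ((1 + t) • b.coord none) x • (c - b none) :=
    fun x => addSMulAffineMap_apply _ _ x
  have hsub : simplexOf b ⊆ T ⁻¹' raise P b c t := by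
    rw [simplexOf_eq_convexHull]
    refine convexHull_min ?_ ((convex_convexHull ℝ _).affine_preimage T)
    rintro _ ⟨i, rfl⟩
    apply subset_convexHull
    rw [hTx]
    cases i with
    | none =>
      left
      simp [add_smul, b.coord_apply]
      abel
    | some i =>
      right
      have hmem : b (some i) ∈ simplexOf b := by
        rw [simplexOf_eq_convexHull]
        exact subset_convexHull _ _ ⟨_, rfl⟩
      simpa [b.coord_apply] using hΔ hmem
  set x := y + ((1 + t) / t * b.coord none y) • (c - b none) with hx
  have hTy : T x = y := by
    have h0 : b.coord none x = -(b.coord none y / t) := by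
      rw [hx, affine_add_smul, coord_linear_sub, hc0, b.coord_apply]
      simp
      field_simp
      ring
    rw [hTx, AffineMap.coe_smul, Pi.smul_apply, h0, hx, add_assoc, ← add_smul]
    convert! add_zero y using 2
    rw [smul_eq_mul]
    convert! zero_smul ℝ (c - b none) using 2
    field_simp
    ring
  have hxΔ : x ∈ simplexOf b := by
    rw [← preimage_pyramid hc0 ht]
    rw [hTx] at hTy
    simpa only [Set.mem_ofPred_eq, hTy] using hy
  rw [← hTy]
  exact hsub hxΔ

lemma eventually_facet_visible {S : Finset (Euc d)} (hS : P = convexHull ℝ (S : Set (Euc d)))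
    (h0 : ∀ x ∈ P, 0 ≤ b.coord none x)
    (hF : ∀ x ∈ P, b.coord none x = 0 → ∀ i, 0 ≤ b.coord (some i) x)
    (hc : ∀ i, 0 < b.coord (some i) c) :
    ∀ᶠ t in 𝓝[>] (0 : ℝ), ∀ q ∈ P, ∀ i,
      0 ≤ t * b.coord (some i) q + (1 + t) * b.coord (some i) c * b.coord none q := by
  have hev : ∀ᶠ t in 𝓝[>] (0 : ℝ), ∀ s ∈ S, ∀ i,
      0 ≤ t * b.coord (some i) s + (1 + t) * b.coord (some i) c * b.coord none s := by
    rw [eventually_all_finset]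
    intro s hs
    rw [eventually_all]
    intro i
    have hsP : s ∈ P := hS ▸ subset_convexHull ℝ _ hs
    rcases (h0 s hsP).eq_or_lt with h | h
    · filter_upwards [self_mem_nhdsWithin] with t ht
      rw [← h, mul_zero, add_zero]
      exact mul_nonneg (le_of_lt ht) (hF s hsP h.symm i)
    · have hcont : Continuous fun t : ℝ =>
          t * b.coord (some i) s + (1 + t) * b.coord (some i) c * b.coord none s := by fun_prop
      have hlim := (hcont.tendsto 0).mono_left (nhdsWithin_le_nhds (s := Set.Ioi 0))
      refine (hlim.eventually (lt_mem_nhds (a := 0) ?_)).mono fun t ht => le_of_lt ht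
      have := mul_pos (hc i) h
      simpa using this
  filter_upwards [hev] with t ht q hq i
  have hconv : Convex ℝ {x | 0 ≤ (t • b.coord (some i) +
      ((1 + t) * b.coord (some i) c) • b.coord none) x} :=
    (convex_Ici (0 : ℝ)).affine_preimage _
  have hsub : P ⊆ {x | 0 ≤ (t • b.coord (some i) +
      ((1 + t) * b.coord (some i) c) • b.coord none) x} := by
    rw [hS]
    refine convexHull_min (fun s hs => ?_) hconv
    simpa using ht s hs i
  simpa using hsub hq

lemma raise_subset_union (hPc : Convex ℝ P) (hPn : P.Nonempty) (hΔ : simplexOf b ⊆ P)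
    (h0 : ∀ x ∈ P, 0 ≤ b.coord none x) (hc0 : b.coord none c = 0) {t : ℝ} (ht : 0 < t)
    (hvis : ∀ q ∈ P, ∀ i,
      0 ≤ t * b.coord (some i) q + (1 + t) * b.coord (some i) c * b.coord none q) :
    raise P b c t ⊆ P ∪ pyramid b c t := by
  intro x hx
  rw [raise, convexHull_insert hPn, hPc.convexHull_eq, mem_convexJoin] at hx
  obtain ⟨p, hp, q, hq, α, β, hα, hβ, hαβ, rfl⟩ := hx
  rw [Set.mem_singleton_iff] at hp
  have hp0 : b.coord none p = -t := by rw [hp]; exact (coord_apex hc0 t).1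
  have hpi : ∀ i, b.coord (some i) p = (1 + t) * b.coord (some i) c := by
    rw [hp]; exact (coord_apex hc0 t).2
  have hfun : ∀ {r s : ℝ}, 0 ≤ s → r + s = 1 → ∀ i, 0 ≤ t * b.coord (some i) (r • p + s • q) +
      (1 + t) * b.coord (some i) c * b.coord none (r • p + s • q) := by
    intro r s hs hrs i
    rw [affine_combo _ hrs, affine_combo _ hrs, hp0, hpi]
    have := mul_nonneg hs (hvis q hq i)
    linarith
  by_cases hneg : b.coord none (α • p + β • q) ≤ 0
  · exact Or.inr ⟨hneg, hfun hβ hαβ⟩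
  left
  rw [affine_combo _ hαβ, hp0] at hneg
  push Not at hneg
  set m := b.coord none q with hm
  have hm0 : 0 < m := by
    rcases (h0 q hq).eq_or_lt with h | h
    · rw [← hm] at h
      rw [← h] at hneg
      nlinarith
    · exact h
  set z := (m / (t + m)) • p + (t / (t + m)) • q with hz
  have hsum : m / (t + m) + t / (t + m) = 1 := by field_simp; ring
  have hz0 : b.coord none z = 0 := by
    rw [hz, affine_combo _ hsum, hp0, ← hm]
    field_simp
    ring
  have hzP : z ∈ P := by
    apply hΔ
    intro i
    cases i with
    | none => exact hz0.ge
    | some i =>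
      have := hfun (r := m / (t + m)) (s := t / (t + m)) (by positivity) hsum i
      rw [← hz, hz0, mul_zero, add_zero] at this
      exact (mul_nonneg_iff_of_pos_left ht).1 this
  have hx : α • p + β • q = (α * (t + m) / m) • z + (1 - α * (t + m) / m) • q := by
    rw [hz, smul_add, smul_smul, smul_smul, add_assoc, ← add_smul]
    have hβ' : β = 1 - α := by linarith
    congr 2
    · field_simp
    · rw [hβ']
      field_simp
      ring
  rw [hx]
  refine hPc hzP hq (by positivity) ?_ (by ring)
  rw [sub_nonneg, div_le_one hm0]
  have hβ' : β = 1 - α := by linarith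
  rw [hβ'] at hneg
  nlinarith

lemma isClosed_pyramid (t : ℝ) : IsClosed (pyramid b c t) := by
  have h := continuous_coord b
  have hset : pyramid b c t = {x | b.coord none x ≤ 0} ∩ ⋂ i, {x |
      0 ≤ t * b.coord (some i) x + (1 + t) * b.coord (some i) c * b.coord none x} := by
    ext x; simp [pyramid]
  rw [hset]
  refine (isClosed_le (h none) continuous_const).inter (isClosed_iInter fun i => ?_)
  exact isClosed_le continuous_const ((continuous_const.mul (h _)).add (continuous_const.mul (h _)))

lemma isConvexBody_raise (hP : IsConvexBody P) {S : Finset (Euc d)}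
    (hS : P = convexHull ℝ (S : Set (Euc d))) (t : ℝ) : IsConvexBody (raise P b c t) := by
  refine ⟨?_, convex_convexHull ℝ _, hP.2.2.mono (interior_mono ?_)⟩
  · have hPn : P.Nonempty := hP.2.2.mono interior_subset
    have hSn : (S : Set (Euc d)).Nonempty := by
      rw [hS] at hPn
      exact convexHull_nonempty_iff.1 hPn
    rw [raise, convexHull_insert hPn, hP.2.1.convexHull_eq, hS, ← convexHull_insert hSn]
    exact (S.finite_toSet.insert _).isCompact_convexHull ℝ
  · exact (Set.subset_insert _ _).trans (subset_convexHull ℝ _)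

lemma hausdorffDist_raise_le (hP : IsConvexBody P) (hcP : c ∈ P) {t : ℝ} (ht : 0 < t) :
    Metric.hausdorffDist (raise P b c t) P ≤ ‖c - b none‖ * t := by
  have hPn : P.Nonempty := hP.2.2.mono interior_subset
  refine Metric.hausdorffDist_le_of_mem_dist (by positivity) ?_ ?_
  · intro x hx
    rw [raise, convexHull_insert hPn, hP.2.1.convexHull_eq, mem_convexJoin] at hx
    obtain ⟨p, hp, q, hq, α, β, hα, hβ, hαβ, rfl⟩ := hx
    rw [Set.mem_singleton_iff] at hp
    refine ⟨α • c + β • q, hP.2.1 hcP hq hα hβ hαβ, ?_⟩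
    rw [dist_eq_norm, hp]
    have : α • (c + t • (c - b none)) + β • q - (α • c + β • q) = (α * t) • (c - b none) := by
      module
    rw [this, norm_smul, Real.norm_of_nonneg (by positivity), mul_comm]
    have : α * t ≤ t := by nlinarith
    gcongr
  · intro x hx
    refine ⟨x, subset_convexHull ℝ _ (Set.mem_insert_of_mem _ hx), ?_⟩
    rw [dist_self]
    positivity

lemma raise_zero (hP : Convex ℝ P) (hcP : c ∈ P) : raise P b c 0 = P := by
  rw [raise, zero_smul, add_zero, Set.insert_eq_of_mem hcP, hP.convexHull_eq]

lemma hasDerivWithinAt_raise (hP : IsConvexBody P) {S : Finset (Euc d)}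
    (hS : P = convexHull ℝ (S : Set (Euc d))) (hΔ : simplexOf b ⊆ P)
    (h0 : ∀ x ∈ P, 0 ≤ b.coord none x)
    (hF : ∀ x ∈ P, b.coord none x = 0 → ∀ i, 0 ≤ b.coord (some i) x)
    (hc0 : b.coord none c = 0) (hc : ∀ i, 0 < b.coord (some i) c)
    {f : Euc d → ℝ} (hf : Continuous f) :
    HasDerivWithinAt (fun t => ∫ x in raise P b c t, f x) (tentVariation b c f) (Set.Ioi 0) 0 := by
  have hPn : P.Nonempty := hP.2.2.mono interior_subset
  have hcP : c ∈ P := by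
    apply hΔ
    intro i
    cases i with
    | none => exact hc0.ge
    | some i => exact (hc i).le
  rw [hasDerivWithinAt_iff_tendsto_slope' (by simp)]
  have hlim := ((continuous_setIntegral_simplexOf b c hf).tendsto 0).mono_left
    (nhdsWithin_le_nhds (s := Set.Ioi 0))
  simp only [add_zero, one_mul] at hlim
  refine Tendsto.congr' ?_ hlim
  filter_upwards [eventually_facet_visible hS h0 hF hc, self_mem_nhdsWithin] with t hvis ht
  rw [Set.mem_Ioi] at ht
  have hunion : raise P b c t = P ∪ pyramid b c t := by
    refine (raise_subset_union hP.2.1 hPn hΔ h0 hc0 ht hvis).antisymm (Set.union_subset ?_ ?_)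
    · exact (Set.subset_insert _ _).trans (subset_convexHull ℝ _)
    · exact pyramid_subset_raise hΔ hc0 ht
  have hint : IntegrableOn f (raise P b c t) :=
    hf.continuousOn.integrableOn_compact (isConvexBody_raise hP hS t).1
  have hdet : 1 + ((1 + t) • b.coord none).linear (c - b none) = -t := by
    rw [AffineMap.smul_linear, LinearMap.smul_apply, coord_linear_sub, hc0]
    simp
  have hcv := setIntegral_comp_add_smul ((1 + t) • b.coord none) (c - b none)
    (by rw [hdet]; exact neg_ne_zero.2 ht.ne') (isClosed_pyramid (b := b) (c := c) t).measurableSet f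
  rw [preimage_pyramid hc0 ht, hdet, abs_neg, abs_of_pos ht] at hcv
  simp only [AffineMap.coe_smul, Pi.smul_apply, smul_eq_mul] at hcv
  rw [slope_def_field, hcv, raise_zero hP.2.1 hcP]
  rw [hunion] at hint ⊢
  rw [setIntegral_union₀ _ (isClosed_pyramid t).measurableSet.nullMeasurableSet
    (hint.mono_set Set.subset_union_left) (hint.mono_set Set.subset_union_right)]
  · field_simp
    ring
  · refine measure_mono_null ?_ (volume_affine_eq_zero (b.coord none) (x := b none) (by simp))
    rintro x ⟨hx1, hx2⟩
    exact le_antisymm hx2.1 (h0 x hx1)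

end Outward

section Inward

variable {P : Set (Euc d)} {b : AffineBasis (Option (Fin d)) ℝ (Euc d)} {k : Fin d}

/-- `P` cut by a hyperplane through the vertices `b (some j)`, `j ≠ k`. -/
def cut (P : Set (Euc d)) (b : AffineBasis (Option (Fin d)) ℝ (Euc d)) (k : Fin d) (t : ℝ) :
    Set (Euc d) :=
  P ∩ {x | t * (b.coord none x + b.coord (some k) x) ≤ b.coord none x}

lemma cut_zero (h0 : ∀ x ∈ P, 0 ≤ b.coord none x) : cut P b k 0 = P :=
  Set.inter_eq_left.2 fun x hx => by simpa using h0 x hx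

lemma isClosed_cutHalfSpace (t : ℝ) :
    IsClosed {x | t * (b.coord none x + b.coord (some k) x) ≤ b.coord none x} := by
  have h := continuous_coord b
  exact isClosed_le (continuous_const.mul ((h _).add (h _))) (h _)

lemma convex_cutHalfSpace (t : ℝ) :
    Convex ℝ {x | t * (b.coord none x + b.coord (some k) x) ≤ b.coord none x} := by
  have h : Convex ℝ {x | (t • (b.coord none + b.coord (some k)) - b.coord none) x ≤ 0} :=
    (convex_Iic (0 : ℝ)).affine_preimage _
  convert! h using 3
  simp [mul_add]

lemma isConvexBody_cut (hP : IsConvexBody P) (ho : b none ∈ interior P) {t : ℝ} (ht : t < 1) :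
    IsConvexBody (cut P b k t) := by
  refine ⟨hP.1.inter_right (isClosed_cutHalfSpace t), hP.2.1.inter (convex_cutHalfSpace t), ?_⟩
  refine ⟨b none, ?_⟩
  have h := continuous_coord b
  have hopen : IsOpen (interior P ∩
      {x | t * (b.coord none x + b.coord (some k) x) < b.coord none x}) :=
    isOpen_interior.inter (isOpen_lt (continuous_const.mul ((h _).add (h _))) (h _))
  refine interior_maximal ?_ hopen ⟨ho, ?_⟩
  · refine Set.inter_subset_inter interior_subset fun x hx => ?_
    simp only [Set.mem_ofPred_eq] at hx ⊢
    exact hx.le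
  · simpa [b.coord_apply] using ht

lemma exists_bound_coord (hP : IsCompact P) :
    ∃ C, 0 < C ∧ ∀ x ∈ P, ∀ i, |b.coord i x| ≤ C := by
  have h : ∀ i, ∃ C, ∀ x ∈ P, |b.coord i x| ≤ C := fun i =>
    hP.exists_bound_of_continuousOn (continuous_coord b i).continuousOn
  choose C hC using h
  refine ⟨1 + ∑ i, |C i|, by positivity, fun x hx i => ?_⟩
  have h1 : |C i| ≤ ∑ i, |C i| :=
    Finset.single_le_sum (f := fun i => |C i|) (fun i _ => abs_nonneg _) (Finset.mem_univ i)
  linarith [hC i x hx, le_abs_self (C i)]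

lemma exists_hausdorffDist_cut_le (hP : IsConvexBody P) (ho : b none ∈ P)
    (h0 : ∀ x ∈ P, 0 ≤ b.coord none x) :
    ∃ C, ∀ᶠ t in 𝓝[>] (0 : ℝ), Metric.hausdorffDist (cut P b k t) P ≤ C * t := by
  obtain ⟨C, hC, hbound⟩ := exists_bound_coord (b := b) hP.1
  obtain ⟨R, hR⟩ := hP.1.isBounded.exists_norm_le
  have hR0 : 0 ≤ R := (norm_nonneg _).trans (hR _ ho)
  refine ⟨2 * C * (2 * R), ?_⟩
  have hsmall : ∀ᶠ t in 𝓝[>] (0 : ℝ), t < min 1 (1 / (2 * C)) :=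
    nhdsWithin_le_nhds (gt_mem_nhds (by positivity))
  filter_upwards [hsmall, self_mem_nhdsWithin] with t ht1 ht0
  rw [Set.mem_Ioi] at ht0
  have hs1 : 2 * C * t ≤ 1 := by
    have := (ht1.trans_le (min_le_right _ _)).le
    rw [le_div_iff₀ (by positivity)] at this
    linarith
  refine Metric.hausdorffDist_le_of_mem_dist (by positivity) ?_ ?_
  · intro x hx
    refine ⟨x, hx.1, ?_⟩
    rw [dist_self]
    positivity
  · intro x hx
    have hsum : (1 - 2 * C * t) + 2 * C * t = 1 := by ring
    set y := (1 - 2 * C * t) • x + (2 * C * t) • b none with hy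
    have hyP : y ∈ P := hP.2.1 hx ho (by linarith) (by positivity) hsum
    refine ⟨y, ⟨hyP, ?_⟩, ?_⟩
    · have h1 := (abs_le.1 (hbound y hyP none)).2
      have h2 := (abs_le.1 (hbound y hyP (some k))).2
      have h3 : 2 * C * t ≤ b.coord none y := by
        rw [hy, affine_combo _ hsum, b.coord_apply]
        have := mul_nonneg (sub_nonneg.2 hs1) (h0 x hx)
        simp only [if_true]
        linarith
      calc t * (b.coord none y + b.coord (some k) y) ≤ t * (C + C) := by gcongr
        _ = 2 * C * t := by ring
        _ ≤ b.coord none y := h3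
    · have hxy : x - y = (2 * C * t) • (x - b none) := by rw [hy]; module
      rw [dist_eq_norm, hxy, norm_smul, Real.norm_of_nonneg (by positivity)]
      have : ‖x - b none‖ ≤ 2 * R := by
        linarith [norm_sub_le x (b none), hR x hx, hR _ ho]
      calc 2 * C * t * ‖x - b none‖ ≤ 2 * C * t * (2 * R) := by gcongr
        _ = 2 * C * (2 * R) * t := by ring

/-- The part of `P` removed by `cut`, blown up by the factor `t⁻¹` towards the direction
transversal to the facet. -/
def blownUpCut (P : Set (Euc d)) (b : AffineBasis (Option (Fin d)) ℝ (Euc d)) (k : Fin d) (t : ℝ) :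
    Set (Euc d) :=
  {x | x + ((1 - t) * b.coord none x) • (b (some k) - b none) ∈ P ∧ 0 < b.coord (some k) x}

lemma coord_shear (b : AffineBasis (Option (Fin d)) ℝ (Euc d)) (k : Fin d) (t : ℝ) (x : Euc d) :
    b.coord none (x + ((1 - t) * b.coord none x) • (b (some k) - b none)) = t * b.coord none x ∧
    b.coord (some k) (x + ((1 - t) * b.coord none x) • (b (some k) - b none))
      = b.coord (some k) x + (1 - t) * b.coord none x ∧
    ∀ j, j ≠ k → b.coord (some j) (x + ((1 - t) * b.coord none x) • (b (some k) - b none))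
      = b.coord (some j) x := by
  refine ⟨?_, ?_, fun j hj => ?_⟩
  all_goals
    rw [affine_add_smul, coord_linear_sub, b.coord_apply, b.coord_apply]
  · simp; ring
  · simp
  · simp [hj]

lemma setIntegral_blownUpCut (hP : IsCompact P) {t : ℝ} (ht : 0 < t) {f : Euc d → ℝ}
    (hf : Continuous f) :
    ∫ x in blownUpCut P b k t, f (x + ((1 - t) * b.coord none x) • (b (some k) - b none))
      = t⁻¹ * ((∫ x in P, f x) - ∫ x in cut P b k t, f x) := by
  have hmeas := (isClosed_cutHalfSpace (b := b) (k := k) t).measurableSet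
  have hint : IntegrableOn f P := hf.continuousOn.integrableOn_compact hP
  have hdet : 1 + ((1 - t) • b.coord none).linear (b (some k) - b none) = t := by
    rw [AffineMap.smul_linear, LinearMap.smul_apply, coord_linear_sub]
    simp [b.coord_apply]
  have hcv := setIntegral_comp_add_smul ((1 - t) • b.coord none) (b (some k) - b none)
    (by rw [hdet]; exact ht.ne') (hP.measurableSet.diff (hP.measurableSet.inter hmeas)) f
  rw [hdet, abs_of_pos ht] at hcv
  rw [cut, ← setIntegral_sdiff (hP.measurableSet.inter hmeas) hint Set.inter_subset_left, ← hcv]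
  simp only [AffineMap.coe_smul, Pi.smul_apply, smul_eq_mul]
  congr 2
  ext x
  obtain ⟨e0, ek, -⟩ := coord_shear b k t x
  simp only [blownUpCut, Set.mem_ofPred_eq, Set.mem_sdiff, Set.mem_inter_iff, e0, ek, not_and,
    not_le]
  have e : t * (t * b.coord none x + (b.coord (some k) x + (1 - t) * b.coord none x))
      = t * b.coord none x + t * b.coord (some k) x := by ring
  rw [e]
  constructor
  · rintro ⟨h1, h2⟩
    exact ⟨h1, fun _ => by have := mul_pos ht h2; linarith⟩
  · rintro ⟨h1, h2⟩
    exact ⟨h1, (mul_pos_iff_of_pos_left ht).1 (by have := h2 h1; linarith)⟩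

lemma measurableSet_blownUpCut (hP : IsCompact P) (t : ℝ) :
    MeasurableSet (blownUpCut P b k t) := by
  have h := continuous_coord b
  refine MeasurableSet.inter ?_ (isOpen_lt continuous_const (h _)).measurableSet
  have hc : Continuous fun x => x + ((1 - t) * b.coord none x) • (b (some k) - b none) := by
    have := h none
    fun_prop
  exact hc.measurable hP.measurableSet

lemma exists_blownUpCut_subset_closedBall (hP : IsCompact P)
    (h0 : ∀ x ∈ P, 0 ≤ b.coord none x) :
    ∃ R, ∀ t, 0 < t → blownUpCut P b k t ⊆ Metric.closedBall 0 R := by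
  obtain ⟨C, hC, hbound⟩ := exists_bound_coord (b := b) hP
  refine ⟨∑ i, 2 * C * ‖b i‖, fun t ht x hx => ?_⟩
  obtain ⟨e0, ek, ej⟩ := coord_shear b k t x
  obtain ⟨hxP, hxk⟩ := hx
  have hx0 : 0 ≤ b.coord none x := by
    have := h0 _ hxP
    rw [e0] at this
    exact (mul_nonneg_iff_of_pos_left ht).1 this
  have hsum : b.coord none x + b.coord (some k) x ≤ 2 * C := by
    have h1 := (abs_le.1 (hbound _ hxP none)).2
    have h2 := (abs_le.1 (hbound _ hxP (some k))).2
    rw [e0] at h1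
    rw [ek] at h2
    linarith
  have hcoord : ∀ i, |b.coord i x| ≤ 2 * C := by
    intro i
    cases i with
    | none => rw [abs_of_nonneg hx0]; linarith
    | some j =>
      by_cases hj : j = k
      · rw [hj, abs_of_pos hxk]; linarith
      · have := hbound _ hxP (some j)
        rw [ej j hj] at this
        linarith
  rw [mem_closedBall_zero_iff, ← b.linear_combination_coord_eq_self x]
  refine (norm_sum_le _ _).trans (Finset.sum_le_sum fun i _ => ?_)
  rw [norm_smul, Real.norm_eq_abs]
  exact mul_le_mul_of_nonneg_right (hcoord i) (norm_nonneg _)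

lemma eventually_mem_blownUpCut_iff (hP : IsCompact P) (hΔ : simplexOf b ⊆ P)
    (h0 : ∀ x ∈ P, 0 ≤ b.coord none x)
    (hF : ∀ x ∈ P, b.coord none x = 0 → ∀ i, 0 ≤ b.coord (some i) x) (x : Euc d) :
    ∀ᶠ t in 𝓝[>] (0 : ℝ),
      (x ∈ blownUpCut P b k t ↔ x ∈ simplexOf b ∩ {x | 0 < b.coord (some k) x}) := by
  by_cases hk : 0 < b.coord (some k) x
  swap
  · exact Eventually.of_forall fun t => ⟨fun h => absurd h.2 hk, fun h => absurd h.2 hk⟩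
  have hlt : ∀ᶠ t in 𝓝[>] (0 : ℝ), t < 1 := nhdsWithin_le_nhds (gt_mem_nhds one_pos)
  by_cases hx : x ∈ simplexOf b
  · filter_upwards [hlt, self_mem_nhdsWithin] with t ht1 ht0
    rw [Set.mem_Ioi] at ht0
    obtain ⟨e0, ek, ej⟩ := coord_shear b k t x
    refine iff_of_true ⟨hΔ fun i => ?_, hk⟩ ⟨hx, hk⟩
    cases i with
    | none => rw [e0]; exact mul_nonneg ht0.le (hx none)
    | some j =>
      by_cases hj : j = k
      · rw [hj, ek]
        have := mul_nonneg (sub_nonneg.2 ht1.le) (hx none)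
        linarith
      · rw [ej j hj]
        exact hx _
  by_cases hx0 : 0 ≤ b.coord none x
  swap
  · filter_upwards [self_mem_nhdsWithin] with t ht0
    rw [Set.mem_Ioi] at ht0
    refine iff_of_false (fun h => hx0 ?_) fun h => hx h.1
    have := h0 _ h.1
    rw [(coord_shear b k t x).1] at this
    exact (mul_nonneg_iff_of_pos_left ht0).1 this
  obtain ⟨j, hjk, hj⟩ : ∃ j, j ≠ k ∧ b.coord (some j) x < 0 := by
    by_contra! hcon
    refine hx fun i => ?_
    cases i with
    | none => exact hx0
    | some j =>
      by_cases hj : j = k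
      · rw [hj]; exact hk.le
      · exact hcon j hj
  have hnot : x + ((1 - 0) * b.coord none x) • (b (some k) - b none) ∉ P := by
    intro hmem
    obtain ⟨e0, -, ej⟩ := coord_shear b k 0 x
    have := hF _ hmem (by rw [e0, zero_mul]) j
    rw [ej j hjk] at this
    exact absurd this (not_le.2 hj)
  have hcont : Continuous fun t : ℝ =>
      x + ((1 - t) * b.coord none x) • (b (some k) - b none) := by fun_prop
  have hev : ∀ᶠ t in 𝓝[>] (0 : ℝ),
      x + ((1 - t) * b.coord none x) • (b (some k) - b none) ∈ Pᶜ :=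
    nhdsWithin_le_nhds (hcont.continuousAt.preimage_mem_nhds (hP.isClosed.isOpen_compl.mem_nhds hnot))
  filter_upwards [hev] with t ht
  exact iff_of_false (fun h => ht h.1) fun h => hx h.1

lemma hasDerivWithinAt_cut (hP : IsCompact P) (hΔ : simplexOf b ⊆ P)
    (h0 : ∀ x ∈ P, 0 ≤ b.coord none x)
    (hF : ∀ x ∈ P, b.coord none x = 0 → ∀ i, 0 ≤ b.coord (some i) x)
    {f : Euc d → ℝ} (hf : Continuous f) :
    HasDerivWithinAt (fun t => ∫ x in cut P b k t, f x) (-tentVariation b (b (some k)) f)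
      (Set.Ioi 0) 0 := by
  rw [hasDerivWithinAt_iff_tendsto_slope' (by simp)]
  set G : ℝ → Euc d → ℝ := fun t x =>
    f (x + ((1 - t) * b.coord none x) • (b (some k) - b none)) with hG
  have hGc : ∀ t, Continuous (G t) := by
    intro t
    have := continuous_coord b none
    fun_prop
  obtain ⟨R, hR⟩ := exists_blownUpCut_subset_closedBall (k := k) hP h0
  obtain ⟨M, hM⟩ := hP.exists_bound_of_continuousOn hf.continuousOn
  have hkmeas : MeasurableSet {x | 0 < b.coord (some k) x} :=
    (isOpen_lt continuous_const (continuous_coord b _)).measurableSet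
  have hlim : Tendsto (fun t => ∫ x, (blownUpCut P b k t).indicator (G t) x) (𝓝[>] 0)
      (𝓝 (∫ x, (simplexOf b ∩ {x | 0 < b.coord (some k) x}).indicator (G 0) x)) := by
    refine tendsto_integral_filter_of_dominated_convergence
      ((Metric.closedBall 0 R).indicator fun _ => |M|) ?_ ?_ ?_ ?_
    · exact Eventually.of_forall fun t => ((hGc t).measurable.indicator
        (measurableSet_blownUpCut hP t)).aestronglyMeasurable
    · filter_upwards [self_mem_nhdsWithin] with t ht
      refine Eventually.of_forall fun x => ?_
      by_cases hx : x ∈ blownUpCut P b k t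
      · rw [Set.indicator_of_mem hx, Set.indicator_of_mem (hR t ht hx)]
        exact (hM _ hx.1).trans (le_abs_self M)
      · rw [Set.indicator_of_notMem hx, norm_zero]
        exact Set.indicator_nonneg (fun _ _ => abs_nonneg M) _
    · exact (integrable_indicator_iff Metric.isClosed_closedBall.measurableSet).2
        (continuous_const.continuousOn.integrableOn_compact (isCompact_closedBall 0 R))
    · refine Eventually.of_forall fun x => ?_
      have hcont : Continuous fun t => G t x := by fun_prop
      have hx := eventually_mem_blownUpCut_iff (k := k) hP hΔ h0 hF x
      by_cases hmem : x ∈ simplexOf b ∩ {x | 0 < b.coord (some k) x}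
      · rw [Set.indicator_of_mem hmem]
        refine ((hcont.tendsto 0).mono_left nhdsWithin_le_nhds).congr' ?_
        filter_upwards [hx] with t ht
        rw [Set.indicator_of_mem (ht.2 hmem)]
      · rw [Set.indicator_of_notMem hmem]
        refine tendsto_const_nhds.congr' ?_
        filter_upwards [hx] with t ht
        rw [Set.indicator_of_notMem fun h => hmem (ht.1 h)]
  have hval : ∫ x, (simplexOf b ∩ {x | 0 < b.coord (some k) x}).indicator (G 0) x
      = tentVariation b (b (some k)) f := by
    rw [integral_indicator ((isCompact_simplexOf b).measurableSet.inter hkmeas), tentVariation]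
    have hae : (simplexOf b ∩ {x | 0 < b.coord (some k) x} : Set (Euc d)) =ᵐ[volume]
        simplexOf b := by
      have hnull := volume_affine_eq_zero (b.coord (some k)) (x := b (some k)) (by simp)
      have hne : ∀ᵐ x : Euc d, b.coord (some k) x ≠ 0 := by
        rw [ae_iff]
        simpa using hnull
      filter_upwards [hne] with x hx
      refine propext ⟨fun h => h.1, fun h => ⟨h, ?_⟩⟩
      exact lt_of_le_of_ne (h (some k)) hx.symm
    rw [setIntegral_congr_set hae]
    simp [hG]
  rw [hval] at hlim
  refine hlim.neg.congr' ?_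
  filter_upwards [self_mem_nhdsWithin] with t ht
  rw [Set.mem_Ioi] at ht
  rw [integral_indicator (measurableSet_blownUpCut hP t), setIntegral_blownUpCut hP ht hf,
    slope_def_field, cut_zero h0]
  field_simp
  ring

end Inward

end Perturbation

section Facet

open Filter Topology

variable {d : ℕ}

lemma continuous_tentVariation (b : AffineBasis (Option (Fin d)) ℝ (Euc d)) {f : Euc d → ℝ}
    (hf : Continuous f) : Continuous fun c => tentVariation b c f := by
  refine continuous_parametric_integral_of_continuous ?_ (isCompact_simplexOf b)
  have := continuous_coord b none
  fun_prop

/-- The first variation, up to a positive factor, of the isotropic constant of an isotropic body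
along the tent with apex above `c`. -/
def isoVariation (b : AffineBasis (Option (Fin d)) ℝ (Euc d)) (c : Euc d) : ℝ :=
  ∑ i, tentVariation b c (fun x => x i * x i) - (d + 2) * tentVariation b c fun _ => 1

lemma continuous_isoVariation (b : AffineBasis (Option (Fin d)) ℝ (Euc d)) :
    Continuous (isoVariation b) := by
  refine (continuous_finsetSum _ fun i _ => ?_).sub (continuous_const.mul ?_)
  · exact continuous_tentVariation b (by fun_prop)
  · exact continuous_tentVariation b continuous_const

lemma volume_real_simplexOf_pos (b : AffineBasis (Option (Fin d)) ℝ (Euc d)) :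
    0 < volume.real (simplexOf b) := by
  refine volume_real_pos ⟨isCompact_simplexOf b, ?_, ?_⟩ <;> rw [simplexOf_eq_convexHull]
  · exact convex_convexHull ℝ _
  · exact ⟨_, b.centroid_mem_interior_convexHull⟩

lemma isoVariation_vertex (b : AffineBasis (Option (Fin d)) ℝ (Euc d)) (k : Fin d) :
    ((d : ℝ) + 1) * (d + 2) * isoVariation b (b (some k)) = volume.real (simplexOf b) *
      ((∑ j, ∑ l, ((1 + (if j = k then (1 : ℝ) else 0) + (if l = k then (1 : ℝ) else 0)) *
        (1 + if j = l then (1 : ℝ) else 0)) * ⟪b (some j), b (some l)⟫)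
        - (d + 1) * (d + 2) ^ 2) := by
  set w : Fin d → Euc d → ℝ := fun j x =>
    b.coord (some j) x + (if j = k then 1 else 0) * b.coord none x with hw
  have hwc : ∀ j, Continuous (w j) := fun j =>
    (continuous_coord b _).add (continuous_const.mul (continuous_coord b _))
  have hint : ∀ f : Euc d → ℝ, Continuous f → IntegrableOn f (simplexOf b) := fun f hf =>
    hf.continuousOn.integrableOn_compact (isCompact_simplexOf b)
  have hy : ∀ x, x + b.coord none x • (b (some k) - b none) = ∑ j, w j x • b (some j) := by
    intro x
    have h1 : ∑ j, w j x • b (some j)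
        = ∑ j, b.coord (some j) x • b (some j) + b.coord none x • b (some k) := by
      simp only [hw, add_smul, Finset.sum_add_distrib]
      simp
    have h2 := b.linear_combination_coord_eq_self x
    rw [Fintype.sum_option] at h2
    rw [h1, smul_sub]
    nth_rewrite 1 [← h2]
    abel
  have hone : tentVariation b (b (some k)) (fun _ => 1) = volume.real (simplexOf b) := by
    simp [tentVariation]
  have hsq : ∑ i, tentVariation b (b (some k)) (fun x => x i * x i)
      = ∑ j, ∑ l, (∫ x in simplexOf b, w j x * w l x) * ⟪b (some j), b (some l)⟫ := by
    simp only [tentVariation]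
    rw [← integral_finsetSum]
    · have hnorm : ∀ y : Euc d, ∑ i, y i * y i = ⟪y, y⟫ := by
        intro y
        simp only [PiLp.inner_apply, RCLike.inner_apply, conj_trivial]
      have hexp : ∀ x, ⟪∑ j, w j x • b (some j), ∑ j, w j x • b (some j)⟫
          = ∑ j, ∑ l, (w j x * w l x) * ⟪b (some j), b (some l)⟫ := by
        intro x
        rw [sum_inner]
        refine Finset.sum_congr rfl fun j _ => ?_
        rw [inner_sum]
        refine Finset.sum_congr rfl fun l _ => ?_
        rw [real_inner_smul_left, real_inner_smul_right]
        ring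
      simp_rw [hnorm, hy, hexp]
      have hjl : ∀ j l, Continuous fun x => (w j x * w l x) * ⟪b (some j), b (some l)⟫ :=
        fun j l => ((hwc j).mul (hwc l)).mul continuous_const
      rw [integral_finsetSum]
      · refine Finset.sum_congr rfl fun j _ => ?_
        rw [integral_finsetSum]
        · exact Finset.sum_congr rfl fun l _ => integral_mul_const _ _
        · exact fun l _ => hint _ (hjl j l)
      · exact fun j _ => hint _ (continuous_finsetSum _ fun l _ => hjl j l)
    · intro i _
      refine hint _ ?_
      have := continuous_coord b none
      fun_prop
  have hmom : ∀ j l, ((d : ℝ) + 1) * (d + 2) * ∫ x in simplexOf b, w j x * w l x =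
      volume.real (simplexOf b) *
        ((1 + (if j = k then (1 : ℝ) else 0) + (if l = k then (1 : ℝ) else 0)) *
        (1 + if j = l then (1 : ℝ) else 0)) := by
    intro j l
    have hM := fun i i' => setIntegral_coord_mul_coord b i i'
    simp only [Fintype.card_option, Fintype.card_fin, Nat.cast_add, Nat.cast_one] at hM
    have hsplit : ∀ p q : ℝ, ∫ x in simplexOf b, (b.coord (some j) x + p * b.coord none x) *
        (b.coord (some l) x + q * b.coord none x) =
        (∫ x in simplexOf b, b.coord (some j) x * b.coord (some l) x) +
        q * (∫ x in simplexOf b, b.coord (some j) x * b.coord none x) +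
        p * (∫ x in simplexOf b, b.coord none x * b.coord (some l) x) +
        p * q * (∫ x in simplexOf b, b.coord none x * b.coord none x) := by
      intro p q
      rw [← integral_const_mul, ← integral_const_mul, ← integral_const_mul, ← integral_add,
        ← integral_add, ← integral_add]
      · refine integral_congr_ae (Eventually.of_forall fun x => ?_)
        ring
      all_goals
        refine hint _ ?_
        have := continuous_coord b
        fun_prop
    have h1 := hM (some j) (some l)
    have h2 := hM (some j) none
    have h3 := hM none (some l)
    have h4 := hM none none
    simp only [Option.some_inj, reduceCtorEq, if_true, if_false] at h1 h2 h3 h4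
    simp only [hw]
    rw [hsplit]
    set p : ℝ := if j = k then 1 else 0 with hp
    set q : ℝ := if l = k then 1 else 0 with hq
    have hpq : (1 + p + q) * (1 + if j = l then (1 : ℝ) else 0)
        = (if j = l then 2 else 1) + q + p + p * q * 2 := by
      rw [hp, hq]
      split_ifs <;> first | (exfalso; grind) | norm_num
    rw [hpq]
    linear_combination h1 + q * h2 + p * h3 + p * q * h4
  rw [isoVariation, hone, hsq, mul_sub, mul_sub, Finset.mul_sum, Finset.mul_sum]
  congr 1
  · refine Finset.sum_congr rfl fun j _ => ?_
    rw [Finset.mul_sum, Finset.mul_sum]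
    refine Finset.sum_congr rfl fun l _ => ?_
    rw [← mul_assoc, hmom]
    ring
  · ring

lemma sum_symm_eq_two_mul_sum_le {n : ℕ} (s : Fin n → Fin n → ℝ) (hs : ∀ i j, s i j = s j i) :
    ∑ i, ∑ j, s i j * (1 + if i = j then (1 : ℝ) else 0)
      = 2 * ∑ i, ∑ j, if i ≤ j then s i j else 0 := by
  have h1 : ∀ i j, s i j * (1 + if i = j then (1 : ℝ) else 0)
      = (if i ≤ j then s i j else 0) + if j ≤ i then s j i else 0 := by
    intro i j
    rw [hs j i]
    rcases lt_trichotomy i j with h | h | h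
    · simp [h.le, h.ne, not_le.2 h]
    · simp [h, mul_add]
    · simp [h.le, h.ne', not_le.2 h]
  simp_rw [h1, Finset.sum_add_distrib]
  rw [Finset.sum_comm (f := fun i j => if j ≤ i then s j i else 0), two_mul]

/-- The vertices of a facet together with a point off the facet hyperplane form an affine basis. -/
lemma exists_affineBasis_of_facet {P F : Set (Euc d)} (hP : IsConvexBody P) (hF : IsFacetOf d P F)
    {v : Fin d → Euc d} (hv : AffineIndependent ℝ v) (hFv : F = convexHull ℝ (Set.range v))
    (hd : d ≠ 0) :
    ∃ b : AffineBasis (Option (Fin d)) ℝ (Euc d), (∀ i, b (some i) = v i) ∧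
      b none ∈ interior P ∧ simplexOf b ⊆ P ∧ (∀ x ∈ P, 0 ≤ b.coord none x) ∧
      ∀ x ∈ P, b.coord none x = 0 → ∀ i, 0 ≤ b.coord (some i) x := by
  have hvF : ∀ i, v i ∈ F := fun i => hFv ▸ subset_convexHull ℝ _ ⟨i, rfl⟩
  obtain ⟨l, hl⟩ := hF.1 ⟨_, hvF ⟨0, Nat.pos_of_ne_zero hd⟩⟩
  obtain ⟨o, ho, hoF⟩ : ∃ o ∈ interior P, o ∉ F := by
    by_contra! hcon
    have hint : (interior F).Nonempty :=
      hP.2.2.mono (interior_maximal hcon isOpen_interior)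
    have htop := affineSpan_eq_top_of_nonempty_interior
      (hint.mono (interior_mono (subset_convexHull ℝ F)))
    have hdim := hF.2
    rw [sdim, htop, AffineSubspace.direction_top, finrank_top, finrank_euclideanSpace,
      Fintype.card_fin] at hdim
    omega
  have hvP : ∀ i, v i ∈ P := fun i => by
    have := hvF i
    rw [hl] at this
    exact this.1
  have hmax : ∀ i, ∀ y ∈ P, l y ≤ l (v i) := fun i => by
    have := hvF i
    rw [hl] at this
    exact this.2
  set M := l (v ⟨0, Nat.pos_of_ne_zero hd⟩)
  have hlv : ∀ i, l (v i) = M := fun i => le_antisymm (hmax _ _ (hvP i)) (hmax i _ (hvP _))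
  have hlo : l o < M := by
    by_contra! hcon
    refine hoF ?_
    rw [hl]
    exact ⟨interior_subset ho, fun y hy => (hmax _ y hy).trans hcon⟩
  let p : Option (Fin d) → Euc d := fun i => i.elim o v
  have hind : AffineIndependent ℝ p := by
    rw [affineIndependent_iff_of_fintype]
    intro w hw hsum
    rw [Finset.univ.weightedVSub_eq_linear_combination hw, Fintype.sum_option] at hsum
    rw [Fintype.sum_option] at hw
    have hlsum := congrArg l hsum
    simp only [map_add, map_sum, map_smul, map_zero, smul_eq_mul, p, Option.elim, hlv,
      ← Finset.sum_mul] at hlsum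
    have hw0 : w none = 0 := by
      have h1 : ∑ i, w (some i) = -w none := by linarith
      rw [h1] at hlsum
      have h2 : w none * (l o - M) = 0 := by linarith
      exact (mul_eq_zero.1 h2).resolve_right (by linarith)
    rw [hw0, zero_add] at hw
    rw [hw0, zero_smul, zero_add] at hsum
    have hv' := (affineIndependent_iff_of_fintype ℝ v).1 hv (fun i => w (some i)) hw
      (by rw [Finset.univ.weightedVSub_eq_linear_combination hw]; exact hsum)
    intro i
    cases i with
    | none => exact hw0
    | some i => exact hv' i
  let b : AffineBasis (Option (Fin d)) ℝ (Euc d) := ⟨p, hind, by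
    rw [hind.affineSpan_eq_top_iff_card_eq_finrank_add_one]
    simp⟩
  have hbn : b none = o := rfl
  have hbs : ∀ i, b (some i) = v i := fun i => rfl
  have hlx : ∀ x, M - l x = b.coord none x * (M - l o) := by
    intro x
    have h1 := congrArg l (b.linear_combination_coord_eq_self x)
    have h2 := b.sum_coord_apply_eq_one x
    rw [Fintype.sum_option] at h2
    simp only [Fintype.sum_option, map_add, map_sum, map_smul, smul_eq_mul, hbn, hbs, hlv,
      ← Finset.sum_mul] at h1
    have h3 : ∑ i, b.coord (some i) x = 1 - b.coord none x := by linarith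
    rw [h3] at h1
    linarith
  refine ⟨b, hbs, ho, ?_, ?_, ?_⟩
  · rw [simplexOf_eq_convexHull]
    refine convexHull_min ?_ hP.2.1
    rintro _ ⟨i, rfl⟩
    cases i with
    | none => exact interior_subset ho
    | some i => exact hvP i
  · intro x hx
    have h1 := hlx x
    have h2 : l x ≤ M := hmax _ x hx
    by_contra! hcon
    have := mul_neg_of_neg_of_pos hcon (sub_pos.2 hlo)
    linarith
  · intro x hx hx0 i
    have hlxM : l x = M := by
      have := hlx x
      rw [hx0, zero_mul] at this
      linarith
    have hxF : x ∈ F := by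
      rw [hl]
      exact ⟨hx, fun y hy => (hmax _ y hy).trans hlxM.ge⟩
    have hsub : F ⊆ simplexOf b := by
      rw [hFv, simplexOf_eq_convexHull]
      refine convexHull_mono ?_
      rintro _ ⟨i, rfl⟩
      exact ⟨some i, rfl⟩
    exact hsub hxF (some i)

end Facet

/-- First order necessary condition. Let `P` be a `d`-dimensional isotropic
simplicial polytope that is a local extremum of `K ↦ L_K`, and let `F` be a facet of `P` with
vertices `v 1, …, v d`. Then for every `k`,
`Σ_{i ≤ j} (1 + δ_{ik} + δ_{jk}) ⟪v i, v j⟫ = (d+1)(d+2)²/2`. -/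
theorem stmt8 {d : ℕ} (P : Set (Euc d)) (hbody : IsConvexBody P)
    (hsimp : IsSimplicialPolytope d P) (hiso : IsIsotropic P)
    (hext : IsLocalExtremumOfIsoConst P)
    (F : Set (Euc d)) (hF : IsFacetOf d P F)
    (v : Fin d → Euc d) (hvind : AffineIndependent ℝ v)
    (hFv : F = convexHull ℝ (Set.range v))
    (k : Fin d) :
    ∑ i : Fin d, ∑ j : Fin d, (if i ≤ j then
        (1 + (if i = k then (1:ℝ) else 0) + (if j = k then (1:ℝ) else 0)) * ⟪v i, v j⟫
      else 0)
      = (d + 1) * (d + 2) ^ 2 / 2 := by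
  have hd : d ≠ 0 := (Fin.pos k).ne'
  obtain ⟨S, hS⟩ := hsimp.1
  obtain ⟨b, hbv, ho, hΔ, h0, hF0⟩ := exists_affineBasis_of_facet hbody hF hvind hFv hd
  obtain ⟨σ, hσ, ε, hε, hσext⟩ : ∃ σ : ℝ, (σ = 1 ∨ σ = -1) ∧ ∃ ε > 0, ∀ K : Set (Euc d),
      IsConvexBody K → Metric.hausdorffDist K P < ε → σ * isoConst K ≤ σ * isoConst P := by
    rcases hext with ⟨ε, hε, h⟩ | ⟨ε, hε, h⟩
    · exact ⟨1, Or.inl rfl, ε, hε, fun K h1 h2 => by simpa using h K h1 h2⟩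
    · exact ⟨-1, Or.inr rfl, ε, hε, fun K h1 h2 => by simpa using h K h1 h2⟩
  have hinner : 0 ≤ σ * isoVariation b (b (some k)) := by
    obtain ⟨C, hC⟩ := exists_hausdorffDist_cut_le (k := k) hbody (interior_subset ho) h0
    have hlt : ∀ᶠ t in nhdsWithin (0 : ℝ) (Set.Ioi 0), t < 1 :=
      nhdsWithin_le_nhds (gt_mem_nhds one_pos)
    have h := first_order_condition hd hbody hiso hσ hε hσext (K := cut P b k)
      (cut_zero h0) (hlt.mono fun t ht => isConvexBody_cut hbody ho ht) hC
      (D := fun f => -tentVariation b (b (some k)) f)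
      fun f hf => hasDerivWithinAt_cut hbody.1 hΔ h0 hF0 hf
    rw [Finset.sum_neg_distrib] at h
    rw [isoVariation]
    linarith
  have houter : ∀ c, b.coord none c = 0 → (∀ i, 0 < b.coord (some i) c) →
      σ * isoVariation b c ≤ 0 := by
    intro c hc0 hc
    have hcP : c ∈ P := by
      refine hΔ fun i => ?_
      cases i with
      | none => exact hc0.ge
      | some i => exact (hc i).le
    have hpos : ∀ᶠ t in nhdsWithin (0 : ℝ) (Set.Ioi 0), 0 < t := self_mem_nhdsWithin
    exact first_order_condition hd hbody hiso hσ hε hσext (K := raise P b c)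
      (raise_zero hbody.2.1 hcP) (Filter.Eventually.of_forall fun t => isConvexBody_raise hbody hS t)
      (hpos.mono fun t ht => hausdorffDist_raise_le hbody hcP ht)
      fun f hf => hasDerivWithinAt_raise hbody hS hΔ h0 hF0 hc0 hc hf
  have houter' : σ * isoVariation b (b (some k)) ≤ 0 := by
    set m : Euc d := ∑ i, (d : ℝ)⁻¹ • b (some i)
    have hd' : (d : ℝ) ≠ 0 := Nat.cast_ne_zero.2 hd
    have hcoord : ∀ a, b.coord a m = ∑ i, (d : ℝ)⁻¹ * b.coord a (b (some i)) := by
      intro a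
      have hw : ∑ _i : Fin d, (d : ℝ)⁻¹ = 1 := by simp [hd']
      have h := Finset.univ.map_affineCombination (fun i => b (some i)) (fun _ => (d : ℝ)⁻¹) hw
        (b.coord a)
      rw [Finset.affineCombination_eq_linear_combination _ _ _ hw,
        Finset.affineCombination_eq_linear_combination _ _ _ hw] at h
      simpa using h
    have hcont : Continuous fun s : ℝ =>
        σ * isoVariation b ((1 - s) • b (some k) + s • m) :=
      continuous_const.mul ((continuous_isoVariation b).comp (by fun_prop))
    have hlim := (hcont.tendsto 0).mono_left (nhdsWithin_le_nhds (s := Set.Ioi 0))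
    simp only [sub_zero, one_smul, zero_smul, add_zero] at hlim
    refine le_of_tendsto hlim ?_
    have hlt : ∀ᶠ s in nhdsWithin (0 : ℝ) (Set.Ioi 0), s < 1 :=
      nhdsWithin_le_nhds (gt_mem_nhds one_pos)
    filter_upwards [hlt, self_mem_nhdsWithin] with s hs1 hs0
    rw [Set.mem_Ioi] at hs0
    have hsum : (1 - s) + s = 1 := by ring
    refine houter _ ?_ fun i => ?_
    · rw [affine_combo _ hsum, hcoord]
      simp [b.coord_apply]
    · rw [affine_combo _ hsum, hcoord]
      have h1 : 0 ≤ b.coord (some i) (b (some k)) := by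
        rw [b.coord_apply]; split_ifs <;> norm_num
      have h2 : ∑ j, (d : ℝ)⁻¹ * b.coord (some i) (b (some j)) = (d : ℝ)⁻¹ := by
        simp [b.coord_apply]
      rw [h2]
      have h3 := mul_nonneg (sub_nonneg.2 hs1.le) h1
      have h4 : 0 < s * (d : ℝ)⁻¹ := by positivity
      linarith
  have hzero : isoVariation b (b (some k)) = 0 := by
    have h := le_antisymm houter' hinner
    refine (mul_eq_zero.1 h).resolve_left ?_
    rcases hσ with rfl | rfl <;> norm_num
  have hmain := isoVariation_vertex b k
  rw [hzero, mul_zero] at hmain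
  have hsum := (mul_eq_zero.1 hmain.symm).resolve_left (volume_real_simplexOf_pos b).ne'
  have hsymm := sum_symm_eq_two_mul_sum_le (fun i j =>
    (1 + (if i = k then (1 : ℝ) else 0) + (if j = k then (1 : ℝ) else 0)) * ⟪v i, v j⟫)
    fun i j => by rw [real_inner_comm]; ring
  simp only [hbv] at hsum
  simp only [mul_right_comm _ _ (⟪_, _⟫ : ℝ)] at hsum hsymm
  linarith

end
end

section
/- Let d ≥ 3 and let P be a d-dimensional simplicial polytope of the form P = { (x, y) ∈ ℝ^{d−1} × ℝ : x ∈ S, −f(x) ≤ y ≤ f(x) }, where S ⊆ ℝ^{d−1} is a (d−1)-dimensional simplex with vertices v_1, …, v_d and f : S → ℝ is an affine function (nonnegative on S). Then P is a simplex; equivalently, f(v_i) ≠ 0 for exactly one index i ∈ {1, …, d}. -/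
open MeasureTheory Finset
open scoped ProbabilityTheory
open scoped RealInnerProductSpace

noncomputable section

section DoubleGraph

variable {ι E : Type*} [NormedAddCommGroup E] [NormedSpace ℝ E]

/-- The region between the graphs of `-f` and `f` over the simplex spanned by `b`. -/
def doubleGraph (b : AffineBasis ι ℝ E) (f : E →ᵃ[ℝ] ℝ) : Set (E × ℝ) :=
  {p | p.1 ∈ convexHull ℝ (Set.range b) ∧ -f p.1 ≤ p.2 ∧ p.2 ≤ f p.1}

/-- The lifts of the points `v l` to the graph of `f`, together with the lift of `v j` to the
graph of `-f`. -/
def graphApex (v : ι → E) (f : E →ᵃ[ℝ] ℝ) (j : ι) : Option ι → E × ℝ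
  | some l => (v l, f (v l))
  | none => (v j, -f (v j))

theorem convex_doubleGraph (b : AffineBasis ι ℝ E) (f : E →ᵃ[ℝ] ℝ) :
    Convex ℝ (doubleGraph b f) := by
  rintro p ⟨hp, hp₁, hp₂⟩ q ⟨hq, hq₁, hq₂⟩ s t hs ht hst
  have hf : f (s • p.1 + t • q.1) = s * f p.1 + t * f q.1 := by
    simpa using Convex.combo_affine_apply (f := f) (x := p.1) (y := q.1) hst
  refine ⟨convex_convexHull ℝ _ hp hq hs ht hst, ?_, ?_⟩ <;>
    simp only [Prod.fst_add, Prod.smul_fst, Prod.snd_add, Prod.smul_snd, smul_eq_mul, hf] <;>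
    nlinarith

theorem graph_mem_doubleGraph (b : AffineBasis ι ℝ E) {f : E →ᵃ[ℝ] ℝ} {i : ι}
    (hf : 0 ≤ f (b i)) : (b i, f (b i)) ∈ doubleGraph b f :=
  ⟨subset_convexHull ℝ _ ⟨i, rfl⟩, by dsimp only; linarith, le_rfl⟩

theorem neg_graph_mem_doubleGraph (b : AffineBasis ι ℝ E) {f : E →ᵃ[ℝ] ℝ} {i : ι}
    (hf : 0 ≤ f (b i)) : (b i, -f (b i)) ∈ doubleGraph b f :=
  ⟨subset_convexHull ℝ _ ⟨i, rfl⟩, le_rfl, by dsimp only; linarith⟩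

theorem AffineBasis.coord_linear_ne_zero [Nontrivial ι] (b : AffineBasis ι ℝ E) (i : ι) :
    (b.coord i).linear ≠ 0 := by
  intro h
  obtain ⟨j, hj⟩ := exists_ne i
  have := (b.coord i).linearMap_vsub (b i) (b j)
  rw [h, b.coord_apply_eq, b.coord_apply_ne hj.symm] at this
  simp at this

theorem AffineBasis.coord_eq_linear_add (b : AffineBasis ι ℝ E) (i : ι) (x : E) :
    b.coord i x = (b.coord i).linear x + b.coord i 0 := by
  simpa using (b.coord i).map_vadd 0 x

variable [Fintype ι]

theorem AffineBasis.map_eq_sum_coord (b : AffineBasis ι ℝ E) (f : E →ᵃ[ℝ] ℝ) (x : E) :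
    f x = ∑ i, b.coord i x * f (b i) := by
  have h := congrArg f (b.affineCombination_coord_eq_self x)
  rw [Finset.map_affineCombination _ _ _ (b.sum_coord_apply_eq_one x),
    Finset.affineCombination_eq_linear_combination _ _ _ (b.sum_coord_apply_eq_one x)] at h
  simpa using h.symm

theorem AffineBasis.eq_of_mem_openSegment (b : AffineBasis ι ℝ E) {l : ι} {x y : E}
    (hx : x ∈ convexHull ℝ (Set.range b)) (hy : y ∈ convexHull ℝ (Set.range b))
    (h : b l ∈ openSegment ℝ x y) : x = b l := by
  classical
  rw [b.convexHull_eq_nonneg_coord] at hx hy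
  obtain ⟨s, t, hs, ht, hst, h⟩ := h
  have hzero : ∀ m, m ≠ l → b.coord m x = 0 := fun m hm ↦ by
    have hc : b.coord m (s • x + t • y) = s * b.coord m x + t * b.coord m y := by
      simpa using Convex.combo_affine_apply (f := b.coord m) (x := x) (y := y) hst
    rw [h, b.coord_apply_ne hm] at hc
    have h₁ := hx m
    have h₂ := mul_nonneg ht.le (hy m)
    by_contra hne
    have := mul_pos hs (lt_of_le_of_ne h₁ (Ne.symm hne))
    linarith
  have hone : b.coord l x = 1 := by
    rw [← b.sum_coord_apply_eq_one x]
    exact (Finset.sum_eq_single l (fun m _ hm ↦ hzero m hm) (by simp)).symm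
  refine b.ext_elem fun m ↦ ?_
  by_cases hm : m = l
  · subst hm; simpa using hone
  · rw [hzero m hm, b.coord_apply_ne hm]

theorem mem_extremePoints_doubleGraph (b : AffineBasis ι ℝ E) {f : E →ᵃ[ℝ] ℝ} {l : ι} {y : ℝ}
    (hf : 0 ≤ f (b l)) (hy : y = f (b l) ∨ y = -f (b l)) :
    (b l, y) ∈ (doubleGraph b f).extremePoints ℝ := by
  refine mem_extremePoints_iff_left.2 ⟨?_, ?_⟩
  · rcases hy with rfl | rfl
    exacts [graph_mem_doubleGraph b hf, neg_graph_mem_doubleGraph b hf]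
  rintro ⟨p, u⟩ ⟨hp, hp₁, hp₂⟩ ⟨q, w⟩ ⟨hq, hq₁, hq₂⟩ ⟨s, t, hs, ht, hst, h⟩
  simp only [Prod.smul_mk, Prod.mk_add_mk, Prod.mk.injEq, smul_eq_mul] at *
  have hpl : p = b l := b.eq_of_mem_openSegment hp hq ⟨s, t, hs, ht, hst, h.1⟩
  have hql : q = b l := b.eq_of_mem_openSegment hq hp
    ⟨t, s, ht, hs, by linarith, by rw [add_comm]; exact h.1⟩
  subst hpl hql
  refine ⟨rfl, ?_⟩
  obtain ⟨-, h⟩ := h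
  have ht' : t = 1 - s := by linarith
  subst ht'
  rcases hy with rfl | rfl <;> apply le_antisymm <;> nlinarith

theorem affineIndependent_graphApex (b : AffineBasis ι ℝ E) {f : E →ᵃ[ℝ] ℝ} {j : ι}
    (hj : f (b j) ≠ 0) : AffineIndependent ℝ (graphApex b f j) := by
  classical
  rw [affineIndependent_iff_of_fintype]
  intro w hw hwp
  rw [Finset.weightedVSub_eq_linear_combination _ hw, Fintype.sum_option] at hwp
  rw [Fintype.sum_option] at hw
  simp only [graphApex, Prod.ext_iff, Prod.fst_add, Prod.snd_add, Prod.fst_sum, Prod.snd_sum,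
    Prod.smul_mk, Prod.fst_zero, Prod.snd_zero, smul_eq_mul] at hwp
  obtain ⟨h₁, h₂⟩ := hwp
  set u : ι → ℝ := fun l ↦ w (some l) + if l = j then w none else 0 with hu
  have hu_sum : ∑ l, u l = 0 := by
    simp only [hu, Finset.sum_add_distrib, Finset.sum_ite_eq', Finset.mem_univ, if_true]
    linarith
  have hu_zero : ∀ l, u l = 0 := by
    refine (affineIndependent_iff_of_fintype ℝ _).1 b.ind u hu_sum ?_
    rw [Finset.weightedVSub_eq_linear_combination _ hu_sum]
    simp only [hu, add_smul, Finset.sum_add_distrib, ite_smul, zero_smul, Finset.sum_ite_eq',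
      Finset.mem_univ, if_true]
    rw [add_comm]
    exact h₁
  have hne : ∀ l, l ≠ j → w (some l) = 0 := fun l hl ↦ by simpa [hu, hl] using hu_zero l
  have hadd : w (some j) + w none = 0 := by simpa [hu] using hu_zero j
  rw [Finset.sum_eq_single j (fun l _ hl ↦ by rw [hne l hl, zero_mul]) (by simp)] at h₂
  have hnone : w none = 0 := by
    have : w none * f (b j) = 0 := by linear_combination (f (b j) * hadd - h₂) / 2
    exact (mul_eq_zero.1 this).resolve_right hj
  rintro (_ | l)
  · exact hnone
  · by_cases hl : l = j
    · subst hl; linarith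
    · exact hne l hl

theorem doubleGraph_eq_convexHull_graphApex (b : AffineBasis ι ℝ E) {f : E →ᵃ[ℝ] ℝ} {j : ι}
    (hj : 0 ≤ f (b j)) (hne : ∀ l, l ≠ j → f (b l) = 0) :
    doubleGraph b f = convexHull ℝ (Set.range (graphApex b f j)) := by
  have hf : ∀ l, 0 ≤ f (b l) := fun l ↦ by
    by_cases hl : l = j
    exacts [hl ▸ hj, (hne l hl).ge]
  apply Set.Subset.antisymm
  · rintro ⟨x, y⟩ ⟨hx, hy₁, hy₂⟩
    dsimp only at hx hy₁ hy₂
    obtain ⟨t, ht₁, ht₂, hty⟩ : ∃ t : ℝ, -1 ≤ t ∧ t ≤ 1 ∧ y = t * f x := by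
      rcases (show 0 ≤ f x by linarith).eq_or_lt with h | h
      · exact ⟨0, by norm_num, by norm_num, by linarith⟩
      · exact ⟨y / f x, by rw [le_div_iff₀ h]; linarith, by rw [div_le_iff₀ h]; linarith,
          by field_simp⟩
    have hsum : (x, y) = ∑ l, b.coord l x • ((b l, t * f (b l)) : E × ℝ) := by
      ext
      · simp [Prod.fst_sum, b.linear_combination_coord_eq_self]
      · simp only [Prod.snd_sum, Prod.smul_snd, smul_eq_mul, hty, b.map_eq_sum_coord f x,
          Finset.mul_sum]
        exact Finset.sum_congr rfl fun l _ ↦ by ring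
    rw [b.convexHull_eq_nonneg_coord] at hx
    rw [hsum]
    refine (convex_convexHull ℝ _).sum_mem (fun l _ ↦ hx l) (b.sum_coord_apply_eq_one x)
      fun l _ ↦ ?_
    have hup : (b l, f (b l)) ∈ convexHull ℝ (Set.range (graphApex b f j)) :=
      subset_convexHull ℝ _ ⟨some l, rfl⟩
    have hdown : (b l, -f (b l)) ∈ convexHull ℝ (Set.range (graphApex b f j)) := by
      by_cases hl : l = j
      · subst hl; exact subset_convexHull ℝ _ ⟨none, rfl⟩
      · simpa [hne l hl] using hup
    convert convex_convexHull ℝ _ hup hdown (a := (1 + t) / 2) (b := (1 - t) / 2)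
      (by linarith) (by linarith) (by ring) using 1
    ext
    · simp only [Prod.fst_add, Prod.smul_fst, ← add_smul]
      rw [show (1 + t) / 2 + (1 - t) / 2 = 1 by ring, one_smul]
    · simp only [Prod.snd_add, Prod.smul_snd, smul_eq_mul]
      ring
  · refine convexHull_min ?_ (convex_doubleGraph b f)
    rintro _ ⟨_ | l, rfl⟩
    exacts [neg_graph_mem_doubleGraph b (hf j), graph_mem_doubleGraph b (hf l)]

/-- If a nonzero linear functional is constant on `F`, then `F` is not full-dimensional. -/
theorem sdim_lt_of_const {V : Type*} [NormedAddCommGroup V] [NormedSpace ℝ V]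
    [FiniteDimensional ℝ V] {F : Set V} {g : V →ₗ[ℝ] ℝ} (hg : g ≠ 0) {c : ℝ}
    (hF : ∀ p ∈ F, g p = c) : sdim F < Module.finrank ℝ V := by
  refine Submodule.finrank_lt fun htop ↦ hg ?_
  rw [← LinearMap.ker_eq_top, eq_top_iff, ← htop, direction_affineSpan, vectorSpan_def,
    Submodule.span_le]
  rintro _ ⟨p, hp, q, hq, rfl⟩
  simp [hF p hp, hF q hq]

/-- The part of the region over the facet of the base simplex opposite to `b i` is a facet, as
soon as `f` does not vanish on this facet of the base. -/
theorem isFacetOf_doubleGraph [FiniteDimensional ℝ E] (b : AffineBasis ι ℝ E)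
    {f : E →ᵃ[ℝ] ℝ} (hf : ∀ l, 0 ≤ f (b l)) {i j : ι} (hij : j ≠ i) (hj : f (b j) ≠ 0) :
    IsFacetOf (Fintype.card ι) (doubleGraph b f) {p ∈ doubleGraph b f | b.coord i p.1 = 0} := by
  classical
  have : Nontrivial ι := ⟨⟨j, i, hij⟩⟩
  have hfin : Module.finrank ℝ (E × ℝ) = Fintype.card ι := by
    rw [Module.finrank_prod, Module.finrank_self, b.card_eq_finrank_add_one]
  have hnonneg : ∀ p ∈ doubleGraph b f, 0 ≤ b.coord i p.1 := fun p hp ↦ by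
    have := hp.1
    rw [b.convexHull_eq_nonneg_coord] at this
    exact this i
  refine ⟨fun _ ↦ ?_, le_antisymm ?_ ?_⟩
  · refine ⟨-((LinearMap.toContinuousLinearMap (b.coord i).linear).comp
      (ContinuousLinearMap.fst ℝ E ℝ)), Set.ext fun p ↦ and_congr_right fun hp ↦ ?_⟩
    simp only [neg_apply, ContinuousLinearMap.comp_apply, ContinuousLinearMap.coe_fst',
      LinearMap.coe_toContinuousLinearMap', neg_le_neg_iff]
    constructor
    · intro h q hq
      have := hnonneg q hq
      rw [b.coord_eq_linear_add] at h this
      linarith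
    · intro h
      have := h _ (graph_mem_doubleGraph b (hf j))
      have h₁ := hnonneg p hp
      have h₂ := b.coord_apply_ne hij.symm
      rw [b.coord_eq_linear_add] at h₁ h₂ ⊢
      dsimp only at this
      linarith
  · rw [← hfin]
    refine Nat.le_sub_one_of_lt (sdim_lt_of_const
      (g := (b.coord i).linear ∘ₗ LinearMap.fst ℝ E ℝ) (c := -b.coord i 0) ?_ ?_)
    · intro h
      refine b.coord_linear_ne_zero i (LinearMap.ext fun x ↦ ?_)
      simpa using LinearMap.congr_fun h (x, 0)
    · rintro p ⟨-, hp⟩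
      rw [b.coord_eq_linear_add] at hp
      simp only [LinearMap.comp_apply, LinearMap.fst_apply]
      linarith
  · have hind := (affineIndependent_graphApex b hj).subtype {o | o ≠ some i}
    have hcard : Fintype.card {o : Option ι // o ≠ some i} = (Fintype.card ι - 1) + 1 := by
      have := Fintype.one_lt_card (α := ι)
      rw [Fintype.card_subtype_compl]
      simp
      omega
    have hrank := hind.finrank_vectorSpan hcard
    rw [← hrank, sdim, direction_affineSpan]
    refine Submodule.finrank_mono (vectorSpan_mono ℝ ?_)
    rintro _ ⟨⟨_ | l, hl⟩, rfl⟩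
    · exact ⟨neg_graph_mem_doubleGraph b (hf j), b.coord_apply_ne hij.symm⟩
    · refine ⟨graph_mem_doubleGraph b (hf l), b.coord_apply_ne fun h ↦ hl ?_⟩
      rw [h]

/-- The part of the region over the facet of the base simplex opposite to `b i` has too many
extreme points to be a simplex if `f` is nonzero at two vertices of this facet. -/
theorem not_isSimplexWith_of_ne (b : AffineBasis ι ℝ E) {f : E →ᵃ[ℝ] ℝ}
    (hf : ∀ l, 0 ≤ f (b l)) {i j k : ι} (hij : j ≠ i) (hik : k ≠ i) (hjk : j ≠ k)
    (hj : f (b j) ≠ 0) (hk : f (b k) ≠ 0) :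
    ¬ IsSimplexWith (Fintype.card ι) {p ∈ doubleGraph b f | b.coord i p.1 = 0} := by
  classical
  rintro ⟨w, -, hw⟩
  let g : Option ι → E × ℝ := fun o ↦ o.elim (b j, -f (b j))
    fun l ↦ if l = i then (b k, -f (b k)) else (b l, f (b l))
  have hginj : Function.Injective g := by
    have hb := b.ind.injective
    have hj' : -f (b j) ≠ f (b j) := fun h ↦ hj (by linarith)
    have hk' : -f (b k) ≠ f (b k) := fun h ↦ hk (by linarith)
    rintro (_ | l) (_ | m) h
    all_goals
      simp only [g, Option.elim] at h
      grind [Function.Injective]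
  have hext : ∀ l y, l ≠ i → (y = f (b l) ∨ y = -f (b l)) → (b l, y) ∈ Set.range w := by
    intro l y hl hy
    have hP := mem_extremePoints_doubleGraph b (hf l) hy
    refine extremePoints_convexHull_subset (𝕜 := ℝ) ?_
    rw [← hw]
    exact inter_extremePoints_subset_extremePoints_of_subset (fun _ h ↦ h.1)
      ⟨⟨hP.1, b.coord_apply_ne hl.symm⟩, hP⟩
  have hsub : ∀ o, g o ∈ Set.range w := by
    rintro (_ | l)
    · exact hext j _ hij (Or.inr rfl)
    · by_cases hl : l = i
      · simpa [g, hl] using hext k _ hik (Or.inr rfl)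
      · simpa [g, hl] using hext l _ hl (Or.inl rfl)
  choose c hc using hsub
  have hcinj : Function.Injective c := fun o o' h ↦ hginj (by rw [← hc, ← hc, h])
  have := Fintype.card_le_of_injective c hcinj
  simp at this

end DoubleGraph

/-- Let `d ≥ 3` and let `P ⊆ ℝ^{d-1} × ℝ` be a `d`-dimensional simplicial
polytope of the form `P = {(x, y) : x ∈ S, -f x ≤ y ≤ f x}` where `S` is a `(d-1)`-dimensional
simplex with vertices `v 1, …, v d` and `f` is affine and nonnegative on `S`. Then `P` is a
simplex; equivalently, `f (v i) ≠ 0` for exactly one index `i`. -/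
theorem stmt9 {d : ℕ} (hd : 3 ≤ d)
    (v : Fin d → EuclideanSpace ℝ (Fin (d - 1))) (hvind : AffineIndependent ℝ v)
    (S : Set (EuclideanSpace ℝ (Fin (d - 1)))) (hS : S = convexHull ℝ (Set.range v))
    (f : EuclideanSpace ℝ (Fin (d - 1)) →ᵃ[ℝ] ℝ) (hf : ∀ x ∈ S, 0 ≤ f x)
    (P : Set (EuclideanSpace ℝ (Fin (d - 1)) × ℝ))
    (hP : P = {p : EuclideanSpace ℝ (Fin (d - 1)) × ℝ |
      p.1 ∈ S ∧ -f p.1 ≤ p.2 ∧ p.2 ≤ f p.1})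
    (hsimp : IsSimplicialPolytope d P) :
    IsSimplexWith (d + 1) P ∧ (∃! i : Fin d, f (v i) ≠ 0) := by
  have htop : affineSpan ℝ (Set.range v) = ⊤ := by
    rw [hvind.affineSpan_eq_top_iff_card_eq_finrank_add_one, Fintype.card_fin,
      finrank_euclideanSpace_fin]
    omega
  let b : AffineBasis (Fin d) ℝ (EuclideanSpace ℝ (Fin (d - 1))) := ⟨v, hvind, htop⟩
  have hPb : P = doubleGraph b f := by rw [hP, hS]; rfl
  have hfb : ∀ l, 0 ≤ f (b l) := fun l ↦ hf _ (hS ▸ subset_convexHull ℝ _ ⟨l, rfl⟩)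
  obtain ⟨-, hdim, hfacet⟩ := hsimp
  rw [hPb] at hdim hfacet ⊢
  have hex : ∃ j, f (b j) ≠ 0 := by
    by_contra! h
    have hlt := sdim_lt_of_const (F := doubleGraph b f)
      (g := LinearMap.snd ℝ (EuclideanSpace ℝ (Fin (d - 1))) ℝ) (c := 0)
      (fun h0 ↦ by simpa using LinearMap.congr_fun h0 (0, 1)) (by
        rintro ⟨x, y⟩ ⟨-, h₁, h₂⟩
        have hx : f x = 0 := by simp [b.map_eq_sum_coord f x, h]
        simp only [LinearMap.snd_apply] at *
        linarith)
    rw [hdim, Module.finrank_prod, Module.finrank_self, finrank_euclideanSpace_fin] at hlt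
    omega
  obtain ⟨j, hj⟩ := hex
  have huniq : ∀ k, k ≠ j → f (b k) = 0 := by
    intro k hkj
    by_contra hk
    obtain ⟨i, hi⟩ : ∃ i, i ∉ ({j, k} : Finset (Fin d)) := by
      by_contra! h
      have h₁ := Finset.card_le_card (fun i _ ↦ h i : (Finset.univ : Finset (Fin d)) ⊆ {j, k})
      have h₂ := Finset.card_le_two (a := j) (b := k)
      rw [Finset.card_univ, Fintype.card_fin] at h₁
      omega
    simp only [Finset.mem_insert, Finset.mem_singleton, not_or] at hi
    have hF := isFacetOf_doubleGraph b hfb (Ne.symm hi.1) hj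
    have hnot := not_isSimplexWith_of_ne b hfb (Ne.symm hi.1) (Ne.symm hi.2) hkj.symm hj hk
    rw [Fintype.card_fin] at hF hnot
    exact hnot (hfacet _ hF)
  refine ⟨?_, j, hj, fun k hk ↦ by_contra fun hkj ↦ hk (huniq k hkj)⟩
  refine ⟨graphApex b f j ∘ finSuccEquiv d, ?_, ?_⟩
  · exact (affineIndependent_graphApex b hj).comp_embedding (finSuccEquiv d).toEmbedding
  · rw [(finSuccEquiv d).surjective.range_comp]
    exact doubleGraph_eq_convexHull_graphApex b (hfb j) huniq

end
end

section
/- Let Y be a random vector uniformly distributed on the standard simplex Δ^{d−1} = conv{ e_1, …, e_d } ⊆ ℝ^d, let v_1, …, v_d be vectors in a Euclidean space ℝ^n, let V be the linear map sending e_i to v_i, and fix k ∈ {1, …, d}. Then E[ ‖V Y‖² · Y_k ] = (2 / (d(d+1)(d+2))) · Σ_{1 ≤ i ≤ j ≤ d} (1 + δ_{ki} + δ_{kj}) ⟨v_i, v_j⟩, where δ is the Kronecker delta. Consequently, E[ ‖V Y‖² · Y_k ] / E[Y_k] = (2 / ((d+1)(d+2))) · Σ_{1 ≤ i ≤ j ≤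 d} (1 + δ_{ki} + δ_{kj}) ⟨v_i, v_j⟩. -/
open MeasureTheory Finset
open scoped ProbabilityTheory
open scoped RealInnerProductSpace

noncomputable section

open scoped Nat ENNReal NNReal

/-- The truncated divided power `x ^ a / a!` on `[0, ∞)`, extended by zero. -/
def powDensity (a : ℕ) (x : ℝ) : ℝ≥0∞ := ENNReal.ofReal (if 0 ≤ x then x ^ a / a ! else 0)

theorem measurable_powDensity (a : ℕ) : Measurable (powDensity a) := by
  unfold powDensity
  refine ENNReal.measurable_ofReal.comp (Measurable.ite measurableSet_Ici ?_ measurable_const)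
  fun_prop

theorem powDensity_of_nonneg (a : ℕ) {x : ℝ} (hx : 0 ≤ x) :
    powDensity a x = ENNReal.ofReal (x ^ a / a !) := by
  simp [powDensity, hx]

theorem powDensity_of_neg (a : ℕ) {x : ℝ} (hx : x < 0) : powDensity a x = 0 := by
  simp [powDensity, not_le.2 hx]

theorem integral_divided_pow_mul_divided_pow (a b : ℕ) (s : ℝ) :
    ∫ x in (0 : ℝ)..s, x ^ a / a ! * ((s - x) ^ b / b !) = s ^ (a + b + 1) / (a + b + 1)! := by
  induction b generalizing a with
  | zero =>
    simp only [pow_zero, Nat.factorial_zero, Nat.cast_one, div_one, mul_one, add_zero]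
    rw [intervalIntegral.integral_div, integral_pow, Nat.factorial_succ]
    push_cast
    field_simp
    simp
  | succ b ih =>
    have hu : ∀ x ∈ Set.uIcc 0 s, HasDerivAt (fun x : ℝ => (s - x) ^ (b + 1) / (b + 1)!)
        (-((s - x) ^ b / b !)) x := by
      intro x _
      have h := ((((hasDerivAt_id x).const_sub s).pow (b + 1)).div_const ((b + 1)! : ℝ))
      refine h.congr_deriv ?_
      rw [Nat.factorial_succ]
      push_cast
      simp
      field_simp
    have hv : ∀ x ∈ Set.uIcc 0 s, HasDerivAt (fun x : ℝ => x ^ (a + 1) / (a + 1)!)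
        (x ^ a / a !) x := by
      intro x _
      have h := (((hasDerivAt_id x).pow (a + 1)).div_const ((a + 1)! : ℝ))
      refine h.congr_deriv ?_
      rw [Nat.factorial_succ]
      push_cast
      simp
      field_simp
    have h := intervalIntegral.integral_mul_deriv_eq_deriv_mul hu hv
      (Continuous.intervalIntegrable (by fun_prop) _ _)
      (Continuous.intervalIntegrable (by fun_prop) _ _)
    have h' := ih (a + 1)
    simp only [mul_comm, sub_self, neg_mul, intervalIntegral.integral_neg] at h h' ⊢
    rw [h, h']
    simp [add_comm, add_left_comm]

/-- Truncated divided powers are closed under convolution. -/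
theorem lintegral_powDensity_mul (a b : ℕ) (s : ℝ) :
    ∫⁻ x, powDensity a x * powDensity b (s - x) = powDensity (a + b + 1) s := by
  have key : (fun x => powDensity a x * powDensity b (s - x)) =
      (Set.Icc 0 s).indicator
        (fun x => ENNReal.ofReal (x ^ a / a ! * ((s - x) ^ b / b !))) := by
    funext x
    by_cases hx : x ∈ Set.Icc 0 s
    · have h0 := hx.1
      rw [Set.indicator_of_mem hx, powDensity_of_nonneg a hx.1,
        powDensity_of_nonneg b (sub_nonneg.2 hx.2), ENNReal.ofReal_mul (by positivity)]
    · rw [Set.indicator_of_notMem hx]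
      rcases lt_or_ge x 0 with h | h
      · simp [powDensity_of_neg a h]
      · have : s - x < 0 := by
          by_contra! h'
          exact hx ⟨h, by linarith⟩
        simp [powDensity_of_neg b this]
  rw [key, lintegral_indicator measurableSet_Icc]
  rcases lt_or_ge s 0 with hs | hs
  · simp [Set.Icc_eq_empty (not_le.2 hs), powDensity_of_neg _ hs]
  · rw [powDensity_of_nonneg _ hs, ← integral_divided_pow_mul_divided_pow,
      intervalIntegral.integral_of_le hs, ← integral_Icc_eq_integral_Ioc,
      ofReal_integral_eq_lintegral_ofReal]
    · exact (Continuous.continuousOn (by fun_prop)).integrableOn_compact isCompact_Icc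
    · refine (ae_restrict_iff' measurableSet_Icc).2 (Filter.Eventually.of_forall fun x hx => ?_)
      have h0 := hx.1
      have h1 := sub_nonneg.2 hx.2
      simp only [Pi.zero_apply]
      positivity

/-- The Dirichlet integral, with the simplex encoded in the supports of the densities. -/
theorem lintegral_prod_powDensity (m : ℕ) (a : Fin m → ℕ) (b : ℕ) (s : ℝ) :
    ∫⁻ x : Fin m → ℝ, (∏ i, powDensity (a i) (x i)) * powDensity b (s - ∑ i, x i) =
      powDensity (m + ∑ i, a i + b) s := by
  induction m generalizing s with
  | zero => simp [lintegral_unique, Measure.volume_pi_eq_dirac 0]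
  | succ m ih =>
    have hm : ∀ n (a : Fin n → ℕ) (s : ℝ), Measurable fun x : Fin n → ℝ =>
        (∏ i, powDensity (a i) (x i)) * powDensity b (s - ∑ i, x i) := by
      intro n a s
      refine (Finset.measurable_fun_prod _ fun i _ =>
        (measurable_powDensity _).comp (measurable_pi_apply i)).mul
        ((measurable_powDensity _).comp (by fun_prop))
    have hmp := (volume_preserving_piFinSuccAbove (fun _ : Fin (m + 1) => ℝ) 0).symm
    have hc := ((hm _ a s).comp hmp.measurable).aemeasurable (μ := volume.prod volume)
    rw [Function.comp_def] at hc
    rw [← hmp.lintegral_comp (hm _ a s), Measure.volume_eq_prod, lintegral_prod _ hc]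
    calc _ = ∫⁻ t : ℝ, powDensity (a 0) t * powDensity (m + ∑ i : Fin m, a i.succ + b) (s - t) := by
          refine lintegral_congr fun t => ?_
          rw [← ih, ← lintegral_const_mul _ (hm _ _ _)]
          refine lintegral_congr fun x => ?_
          simp [MeasurableEquiv.piFinSuccAbove, Fin.prod_univ_succ, Fin.sum_univ_succ,
            mul_assoc, sub_sub]
      _ = _ := by
          rw [lintegral_powDensity_mul, Fin.sum_univ_succ]
          congr 1
          ring

/-- The linear part of the chart `simplexChart`. -/
def simplexChartLinear (m : ℕ) : (Fin m → ℝ) →L[ℝ] EuclideanSpace ℝ (Fin (m + 1)) :=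
  LinearMap.toContinuousLinearMap
    { toFun := fun x => WithLp.toLp 2 (Fin.cons (-∑ i, x i) x)
      map_add' := fun x y => by
        ext i
        refine Fin.cases ?_ (fun j => ?_) i <;> simp [Finset.sum_add_distrib, add_comm]
      map_smul' := fun c x => by
        ext i
        refine Fin.cases ?_ (fun j => ?_) i <;> simp [Finset.mul_sum] }

/-- The affine chart `x ↦ (1 - ∑ xᵢ, x)` of the hyperplane `∑ yᵢ = 1`. -/
def simplexChart (m : ℕ) (x : Fin m → ℝ) : EuclideanSpace ℝ (Fin (m + 1)) :=
  simplexChartLinear m x + EuclideanSpace.single 0 1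

@[simp]
theorem simplexChart_zero {m : ℕ} (x : Fin m → ℝ) : simplexChart m x 0 = 1 - ∑ i, x i := by
  simp [simplexChart, simplexChartLinear]
  ring

@[simp]
theorem simplexChart_succ {m : ℕ} (x : Fin m → ℝ) (i : Fin m) :
    simplexChart m x i.succ = x i := by
  simp [simplexChart, simplexChartLinear]

/-- Forgetting the zeroth coordinate, a left inverse of `simplexChart`. -/
def dropZeroCoord (m : ℕ) : EuclideanSpace ℝ (Fin (m + 1)) →L[ℝ] (Fin m → ℝ) :=
  ContinuousLinearMap.pi fun i => EuclideanSpace.proj i.succ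

theorem dropZeroCoord_leftInverse (m : ℕ) :
    Function.LeftInverse (dropZeroCoord m) (simplexChart m) := by
  intro x
  ext i
  simp [dropZeroCoord]

theorem lipschitzWith_simplexChart (m : ℕ) :
    LipschitzWith ‖simplexChartLinear m‖₊ (simplexChart m) := by
  intro x y
  simpa [simplexChart] using (simplexChartLinear m).lipschitz x y

theorem measurableEmbedding_simplexChart (m : ℕ) : MeasurableEmbedding (simplexChart m) :=
  ((dropZeroCoord_leftInverse m).isClosedEmbedding (dropZeroCoord m).continuous
    (lipschitzWith_simplexChart m).continuous).measurableEmbedding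

theorem mem_range_simplexChart {m : ℕ} {y : EuclideanSpace ℝ (Fin (m + 1))}
    (hy : ∑ i, y i = 1) : y ∈ Set.range (simplexChart m) := by
  refine ⟨dropZeroCoord m y, ?_⟩
  ext i
  refine Fin.cases ?_ (fun j => ?_) i
  · rw [Fin.sum_univ_succ] at hy
    simp [dropZeroCoord, ← hy]
  · simp [dropZeroCoord]

theorem comap_simplexChart_apply {m : ℕ} (s : Set (Fin m → ℝ)) :
    (μH[(m : ℝ)]).comap (simplexChart m) s = μH[(m : ℝ)] (simplexChart m '' s) :=
  (measurableEmbedding_simplexChart m).comap_apply _ _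

theorem hausdorffMeasure_fin_real (m : ℕ) : (μH[(m : ℝ)] : Measure (Fin m → ℝ)) = volume := by
  simpa using hausdorffMeasure_pi_real (ι := Fin m)

instance isAddHaarMeasure_comap_simplexChart (m : ℕ) :
    ((μH[(m : ℝ)]).comap (simplexChart m)).IsAddHaarMeasure where
  lt_top_of_isCompact K hK := by
    rw [comap_simplexChart_apply]
    refine ((lipschitzWith_simplexChart m).hausdorffMeasure_image_le m.cast_nonneg K).trans_lt ?_
    rw [hausdorffMeasure_fin_real]
    exact ENNReal.mul_lt_top (ENNReal.rpow_lt_top_of_nonneg m.cast_nonneg ENNReal.coe_ne_top)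
      hK.measure_lt_top
  map_add_left_eq_self g := by
    ext s hs
    rw [Measure.map_apply (measurable_const_add g) hs, comap_simplexChart_apply,
      comap_simplexChart_apply,
      ← (IsometryEquiv.addLeft (simplexChartLinear m g)).hausdorffMeasure_image]
    congr 1
    ext y
    simp only [Set.mem_image, Set.mem_preimage, exists_exists_and_eq_and]
    constructor
    · rintro ⟨x, hx, rfl⟩
      exact ⟨g + x, hx, by simp [simplexChart, add_assoc]⟩
    · rintro ⟨x, hx, rfl⟩
      exact ⟨-g + x, by simpa using hx, by simp [simplexChart, add_assoc]⟩
  open_pos U hU hne h := by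
    rw [comap_simplexChart_apply] at h
    have h' := (dropZeroCoord m).lipschitz.hausdorffMeasure_image_le m.cast_nonneg
      (simplexChart m '' U)
    rw [(dropZeroCoord_leftInverse m).image_image, h, mul_zero, hausdorffMeasure_fin_real] at h'
    exact hU.measure_ne_zero volume hne (le_antisymm h' zero_le)

theorem exists_comap_simplexChart_eq_smul_volume (m : ℕ) :
    ∃ c : ℝ≥0, 0 < c ∧ (μH[(m : ℝ)]).comap (simplexChart m) = c • volume :=
  ⟨_, Measure.addHaarScalarFactor_pos_of_isAddHaarMeasure _ _,
    Measure.isAddLeftInvariant_eq_smul _ volume⟩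

theorem mem_convexHull_range_single {d : ℕ} {y : EuclideanSpace ℝ (Fin d)} :
    y ∈ convexHull ℝ (Set.range fun i : Fin d => EuclideanSpace.single i (1 : ℝ)) ↔
      (∀ i, 0 ≤ y i) ∧ ∑ i, y i = 1 := by
  have h := (EuclideanSpace.equiv (Fin d) ℝ).toLinearEquiv.toLinearMap.image_convexHull
    (Set.range fun i : Fin d => EuclideanSpace.single i (1 : ℝ))
  have h2 : (Set.range fun i : Fin d => (Pi.single i 1 : Fin d → ℝ)) =
      (EuclideanSpace.equiv (Fin d) ℝ).toLinearEquiv.toLinearMap ''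
        (Set.range fun i : Fin d => EuclideanSpace.single i (1 : ℝ)) := by
    rw [← Set.range_comp]
    congr 1
  rw [← h2, convexHull_rangle_single_eq_stdSimplex] at h
  rw [← (EuclideanSpace.equiv (Fin d) ℝ).injective.mem_set_image]
  exact Set.ext_iff.1 h _

/-- Moments of the coordinates on the standard simplex. -/
theorem exists_lintegral_prod_pow_simplex (m : ℕ) :
    ∃ c : ℝ≥0, 0 < c ∧ ∀ e : Fin (m + 1) → ℕ,
      ∫⁻ y in convexHull ℝ (Set.range fun i : Fin (m + 1) => EuclideanSpace.single i (1 : ℝ)),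
        ENNReal.ofReal (∏ i, y i ^ e i) ∂(μH[(m : ℝ)]) =
      c * ENNReal.ofReal ((∏ i, (e i)! : ℕ) / (m + ∑ i, e i)!) := by
  obtain ⟨c, hc, h⟩ := exists_comap_simplexChart_eq_smul_volume m
  refine ⟨c, hc, fun e => ?_⟩
  set Δ := convexHull ℝ (Set.range fun i : Fin (m + 1) => EuclideanSpace.single i (1 : ℝ))
    with hΔ
  have hmeas : MeasurableSet Δ := ((Set.finite_range _).isCompact_convexHull ℝ).measurableSet
  have hsub : Δ ⊆ Set.range (simplexChart m) := fun y hy =>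
    mem_range_simplexChart (mem_convexHull_range_single.1 hy).2
  have hfac : ∀ n : ℕ, (0 : ℝ) < n ! := fun n => by positivity
  rw [← Set.inter_eq_left.2 hsub, ← Measure.restrict_restrict hmeas,
    ← (measurableEmbedding_simplexChart m).map_comap, h, ← lintegral_indicator hmeas,
    (measurableEmbedding_simplexChart m).lintegral_map, lintegral_smul_measure,
    ENNReal.smul_def, smul_eq_mul]
  congr 1
  have hpt : ∀ x : Fin m → ℝ, Δ.indicator (fun y => ENNReal.ofReal (∏ i, y i ^ e i))
      (simplexChart m x) = ENNReal.ofReal (∏ i, (e i)! : ℕ) *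
        ((∏ i, powDensity (e (Fin.succ i)) (x i)) * powDensity (e 0) (1 - ∑ i, x i)) := by
    intro x
    have hx : simplexChart m x ∈ Δ ↔ 0 ≤ 1 - ∑ i, x i ∧ ∀ i, 0 ≤ x i := by
      rw [hΔ, mem_convexHull_range_single, Fin.forall_fin_succ, Fin.sum_univ_succ]
      simp
    by_cases hm : simplexChart m x ∈ Δ
    · obtain ⟨h0, h1⟩ := hx.1 hm
      rw [Set.indicator_of_mem hm, powDensity_of_nonneg _ h0]
      simp_rw [fun i => powDensity_of_nonneg (e (Fin.succ i)) (h1 i)]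
      have hnn : ∀ i ∈ (univ : Finset (Fin m)), 0 ≤ x i ^ e i.succ / (e i.succ)! :=
        fun i _ => div_nonneg (pow_nonneg (h1 i) _) (hfac _).le
      rw [← ENNReal.ofReal_prod_of_nonneg hnn, ← ENNReal.ofReal_mul (prod_nonneg hnn),
        ← ENNReal.ofReal_mul (Nat.cast_nonneg _)]
      congr 1
      rw [Fin.prod_univ_succ, Fin.prod_univ_succ, Finset.prod_div_distrib]
      have hp : (∏ i : Fin m, ((e i.succ)! : ℝ)) ≠ 0 := prod_ne_zero_iff.2 fun i _ => (hfac _).ne'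
      have h0' := (hfac (e 0)).ne'
      push_cast
      simp only [simplexChart_zero, simplexChart_succ]
      field_simp
    · rw [Set.indicator_of_notMem hm]
      rw [hx, not_and_or, not_forall] at hm
      rcases hm with hm | ⟨i, hi⟩
      · rw [powDensity_of_neg _ (not_le.1 hm), mul_zero, mul_zero]
      · rw [prod_eq_zero (mem_univ i) (powDensity_of_neg _ (not_le.1 hi)), zero_mul, mul_zero]
  simp_rw [hpt]
  rw [lintegral_const_mul' _ _ ENNReal.ofReal_ne_top, lintegral_prod_powDensity,
    powDensity_of_nonneg _ zero_le_one, ← ENNReal.ofReal_mul (Nat.cast_nonneg _),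
    Fin.sum_univ_succ]
  congr 1
  rw [one_pow, mul_one_div, add_assoc, add_comm (∑ i : Fin m, e i.succ)]

theorem exists_integral_prod_pow_simplex (m : ℕ) :
    ∃ c : ℝ, 0 < c ∧ ∀ e : Fin (m + 1) → ℕ,
      ∫ y in convexHull ℝ (Set.range fun i : Fin (m + 1) => EuclideanSpace.single i (1 : ℝ)),
        ∏ i, y i ^ e i ∂(μH[(m : ℝ)]) =
      c * ((∏ i, (e i)! : ℕ) / (m + ∑ i, e i)!) ∧
      IntegrableOn (fun y : EuclideanSpace ℝ (Fin (m + 1)) => ∏ i, y i ^ e i)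
        (convexHull ℝ (Set.range fun i : Fin (m + 1) => EuclideanSpace.single i (1 : ℝ)))
        (μH[(m : ℝ)]) := by
  obtain ⟨c, hc, h⟩ := exists_lintegral_prod_pow_simplex m
  refine ⟨c, hc, fun e => ?_⟩
  have hmeas : MeasurableSet (convexHull ℝ (Set.range fun i : Fin (m + 1) =>
    EuclideanSpace.single i (1 : ℝ))) := ((Set.finite_range _).isCompact_convexHull ℝ).measurableSet
  have hnn : 0 ≤ᵐ[(μH[(m : ℝ)]).restrict (convexHull ℝ (Set.range fun i : Fin (m + 1) =>
      EuclideanSpace.single i (1 : ℝ)))]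
      fun y : EuclideanSpace ℝ (Fin (m + 1)) => ∏ i, y i ^ e i :=
    (ae_restrict_iff' hmeas).2 (Filter.Eventually.of_forall fun y hy =>
      prod_nonneg fun i _ => pow_nonneg ((mem_convexHull_range_single.1 hy).1 i) _)
  have hcont : Continuous fun y : EuclideanSpace ℝ (Fin (m + 1)) => ∏ i, y i ^ e i := by
    fun_prop
  constructor
  · rw [integral_eq_lintegral_of_nonneg_ae hnn hcont.aestronglyMeasurable, h, ENNReal.toReal_mul,
      ENNReal.toReal_ofReal (by positivity)]
    simp
  · refine ⟨hcont.aestronglyMeasurable, ?_⟩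
    rw [hasFiniteIntegral_iff_ofReal hnn, h]
    exact ENNReal.mul_lt_top ENNReal.coe_lt_top ENNReal.ofReal_lt_top

theorem prod_factorial_add_single {d : ℕ} (f : Fin d → ℕ) (i : Fin d) :
    ∏ l, ((f + Pi.single i 1 : Fin d → ℕ) l)! = (f i + 1) * ∏ l, (f l)! := by
  rw [← mul_prod_erase _ _ (mem_univ i), ← mul_prod_erase univ (fun l => (f l)!) (mem_univ i),
    ← mul_assoc]
  congr 1
  · simp [Nat.factorial_succ]
  · refine prod_congr rfl fun l hl => ?_
    simp [(mem_erase.1 hl).1]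

theorem prod_pow_add_single {d : ℕ} (y : Fin d → ℝ) (f : Fin d → ℕ) (i : Fin d) :
    ∏ l, y l ^ ((f + Pi.single i 1 : Fin d → ℕ) l) = (∏ l, y l ^ f l) * y i := by
  simp only [Pi.add_apply, pow_add, prod_mul_distrib]
  congr 1
  rw [prod_eq_single i (fun l _ hl => by simp [hl]) (by simp)]
  simp

/-- Weighting the diagonal twice in a symmetric double sum doubles the sum over `i ≤ j`. -/
theorem sum_sum_diag_weight_eq_two_mul {d : ℕ} (g : Fin d → Fin d → ℝ)
    (hg : ∀ i j, g i j = g j i) :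
    ∑ i, ∑ j, (1 + if i = j then (1 : ℝ) else 0) * g i j =
      2 * ∑ i, ∑ j, if i ≤ j then g i j else 0 := by
  have h : ∑ i, ∑ j, (if i ≤ j then g i j else 0) = ∑ i, ∑ j, if j ≤ i then g i j else 0 := by
    rw [sum_comm]
    simp_rw [fun i j => hg j i]
  rw [two_mul]
  nth_rewrite 2 [h]
  simp_rw [← sum_add_distrib]
  refine sum_congr rfl fun i _ => sum_congr rfl fun j _ => ?_
  rcases lt_trichotomy i j with hij | rfl | hij
  · simp [hij.le, hij.ne, not_le.2 hij]
  · simp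
    ring
  · simp [hij.le, hij.ne', not_le.2 hij]

theorem norm_sum_smul_sq_mul {d n : ℕ} (y : Fin d → ℝ) (v : Fin d → EuclideanSpace ℝ (Fin n))
    (k : Fin d) :
    ‖∑ i, y i • v i‖ ^ 2 * y k = ∑ i, ∑ j, ⟪v i, v j⟫ *
      ∏ l, y l ^ ((0 + Pi.single i 1 + Pi.single j 1 + Pi.single k 1 : Fin d → ℕ) l) := by
  simp_rw [prod_pow_add_single]
  rw [← real_inner_self_eq_norm_sq, sum_inner, sum_mul]
  refine sum_congr rfl fun i _ => ?_
  rw [inner_sum, sum_mul]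
  refine sum_congr rfl fun j _ => ?_
  rw [real_inner_smul_left, real_inner_smul_right]
  simp
  ring

/-- Let `Y` be uniform on the standard simplex
`Δ^{d-1} = conv{e 1, …, e d} ⊆ ℝ^d` (w.r.t. normalized `(d-1)`-dimensional Hausdorff measure),
`v 1, …, v d ∈ ℝ^n`, `V` the linear map `eᵢ ↦ vᵢ`, and `k ∈ {1, …, d}`. Then
`E[‖V Y‖² Y_k] = (2/(d(d+1)(d+2))) Σ_{i ≤ j} (1 + δ_{ki} + δ_{kj}) ⟪v i, v j⟫` and consequently
`E[‖V Y‖² Y_k] / E[Y_k] = (2/((d+1)(d+2))) Σ_{i ≤ j} (1 + δ_{ki} + δ_{kj}) ⟪v i, v j⟫`. -/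
theorem stmt11 {d n : ℕ} (hd : 1 ≤ d)
    (Δ : Set (EuclideanSpace ℝ (Fin d)))
    (hΔ : Δ = convexHull ℝ (Set.range fun i : Fin d => EuclideanSpace.single i (1 : ℝ)))
    (v : Fin d → EuclideanSpace ℝ (Fin n)) (k : Fin d) :
    (∫ y in Δ, ‖∑ i : Fin d, y i • v i‖ ^ 2 * y k ∂(μH[(d - 1 : ℝ)])) /
        (μH[(d - 1 : ℝ)] Δ).toReal
      = (2 / (d * (d + 1) * (d + 2))) *
        ∑ i : Fin d, ∑ j : Fin d, (if i ≤ j then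
          (1 + (if k = i then (1:ℝ) else 0) + (if k = j then (1:ℝ) else 0)) * ⟪v i, v j⟫
        else 0) ∧
    ((∫ y in Δ, ‖∑ i : Fin d, y i • v i‖ ^ 2 * y k ∂(μH[(d - 1 : ℝ)])) /
          (μH[(d - 1 : ℝ)] Δ).toReal) /
        ((∫ y in Δ, y k ∂(μH[(d - 1 : ℝ)])) / (μH[(d - 1 : ℝ)] Δ).toReal)
      = (2 / ((d + 1) * (d + 2))) *
        ∑ i : Fin d, ∑ j : Fin d, (if i ≤ j then
          (1 + (if k = i then (1:ℝ) else 0) + (if k = j then (1:ℝ) else 0)) * ⟪v i, v j⟫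
        else 0) := by
  obtain ⟨m, rfl⟩ := Nat.exists_eq_succ_of_ne_zero (Nat.one_le_iff_ne_zero.1 hd)
  have hm : ((m.succ : ℕ) : ℝ) - 1 = m := by simp
  rw [hm, hΔ]
  obtain ⟨c, hc, h⟩ := exists_integral_prod_pow_simplex m
  have hfac : (0 : ℝ) < m ! := by positivity
  have hvol : (μH[(m : ℝ)] (convexHull ℝ (Set.range fun i : Fin m.succ =>
      EuclideanSpace.single i (1 : ℝ)))).toReal = c / m ! := by
    simpa [measureReal_def, div_eq_mul_inv] using (h 0).1
  have hmean : ∫ y in convexHull ℝ (Set.range fun i : Fin m.succ =>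
      EuclideanSpace.single i (1 : ℝ)), y k ∂(μH[(m : ℝ)]) = c / (m + 1)! := by
    have hk := (h (0 + Pi.single k 1)).1
    simp_rw [prod_factorial_add_single, prod_pow_add_single] at hk
    simpa [div_eq_mul_inv] using hk
  have hmain : ∫ y in convexHull ℝ (Set.range fun i : Fin m.succ =>
      EuclideanSpace.single i (1 : ℝ)), ‖∑ i, y i • v i‖ ^ 2 * y k ∂(μH[(m : ℝ)]) =
      c / (m + 3)! * (2 * ∑ i : Fin m.succ, ∑ j : Fin m.succ, (if i ≤ j then
          (1 + (if k = i then (1:ℝ) else 0) + (if k = j then (1:ℝ) else 0)) * ⟪v i, v j⟫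
        else 0)) := by
    rw [← sum_sum_diag_weight_eq_two_mul (fun i j =>
      (1 + (if k = i then (1:ℝ) else 0) + (if k = j then (1:ℝ) else 0)) * ⟪v i, v j⟫)
      (fun i j => by rw [real_inner_comm]; ring)]
    simp_rw [norm_sum_smul_sq_mul]
    rw [integral_finsetSum _ fun i _ => integrable_finsetSum _ fun j _ => ((h _).2.const_mul _),
      mul_sum]
    refine sum_congr rfl fun i _ => ?_
    rw [integral_finsetSum _ fun j _ => ((h _).2.const_mul _), mul_sum]
    refine sum_congr rfl fun j _ => ?_
    rw [integral_const_mul, (h _).1]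
    simp_rw [prod_factorial_add_single]
    simp [Pi.single_apply, sum_add_distrib, eq_comm (a := j) (b := i)]
    ring
  have h1 : ((m + 1)! : ℝ) = (m + 1) * m ! := by simp [Nat.factorial_succ]
  have h3 : ((m + 3)! : ℝ) = (m + 3) * ((m + 2) * ((m + 1) * m !)) := by
    simp [Nat.factorial_succ]
    ring
  rw [hvol, hmean, hmain, h1, h3]
  push_cast
  constructor
  · field_simp
    ring
  · field_simp
    ring

end
end
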